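/- arXiv:2011.05835 — 7 statements merged into one kernel-verified Lean document; each statement's English description precedes it below -/
import Mathlib

section
/- Let X be an n-dimensional real normed linear space whose closed unit ball B_X has only finitely many extreme points (i.e., X is an n-dimensional polyhedral Banach space). Let F be a face of B_X (a nonempty convex subset F of B_X such that whenever x, y ∈ B_X, t ∈ (0,1) and (1−t)x + t y ∈ F, then x, y ∈ F) that is contained in the unit sphere S_X, and suppose the dimension of F (the dimension of the linear span of the differences v − w of vectors v, w ∈ F) equals i. Then every x in the relative interior of F is (n−i)-smooth, i.e., dim span J(x) = n − i. -/
open Metric Set Module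

/-- `J x` is the set of supporting functionals of `x`. -/
def suppFunctionals {E : Type*} [NormedAddCommGroup E] [NormedSpace ℝ E] (x : E) :
    Set (E →L[ℝ] ℝ) := {f | ‖f‖ = 1 ∧ f x = 1}

lemma face_relint {X : Type*} [NormedAddCommGroup X] [NormedSpace ℝ X]
    (F : Set X) (x : X) (hx : x ∈ intrinsicInterior ℝ F) (q : X) (hq : q ∈ affineSpan ℝ F) :
    ∃ ε : ℝ, 0 < ε ∧ x + ε • (x - q) ∈ F := by
  obtain ⟨y, hy, rfl⟩ := mem_intrinsicInterior.1 hx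
  have hmem : ∀ t : ℝ, (y : X) + t • ((y : X) - q) ∈ affineSpan ℝ F := by
    intro t
    have := AffineSubspace.vadd_mem_of_mem_direction
      (Submodule.smul_mem _ t (AffineSubspace.vsub_mem_direction y.2 hq)) y.2
    simpa [add_comm] using this
  let c : ℝ → affineSpan ℝ F := fun t => ⟨(y : X) + t • ((y : X) - q), hmem t⟩
  have hc : Continuous c := by
    apply Continuous.subtype_mk
    fun_prop
  have hc0 : c 0 = y := by ext; simp [c]
  have h1 : ∀ᶠ t in nhds (0 : ℝ), c t ∈ interior ((↑) ⁻¹' F : Set (affineSpan ℝ F)) := by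
    apply hc.continuousAt.eventually_mem
    rw [hc0]
    exact isOpen_interior.mem_nhds hy
  obtain ⟨ε, hε, hε0⟩ := ((h1.filter_mono nhdsWithin_le_nhds).and
    (self_mem_nhdsWithin : Ioi (0 : ℝ) ∈ nhdsWithin 0 (Ioi 0))).exists
  have hm := interior_subset hε
  exact ⟨ε, hε0, hm⟩

lemma mem_span_supp {X : Type*} [NormedAddCommGroup X] [NormedSpace ℝ X]
    (x : X) (hx : ‖x‖ = 1) (φ : X →L[ℝ] ℝ) (h : ∀ y ∈ closedBall (0 : X) 1, φ y ≤ φ x) :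
    φ ∈ Submodule.span ℝ (suppFunctionals x) := by
  by_cases h0 : φ = 0
  · rw [h0]; exact Submodule.zero_mem _
  have hpos : 0 < ‖φ‖ := norm_pos_iff.2 h0
  have hφx : φ x = ‖φ‖ := by
    apply le_antisymm
    · have := φ.le_opNorm x
      rw [hx, mul_one] at this
      exact (le_abs_self _).trans this
    · have hx0 : 0 ≤ φ x := by
        simpa using h 0 (by simp)
      refine φ.opNorm_le_of_unit_norm hx0 ?_
      intro y hy
      rw [Real.norm_eq_abs, abs_le]
      constructor
      · have := h (-y) (by simp [hy])
        rw [map_neg] at this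
        linarith
      · exact h y (by simp [hy])
  have : φ = ‖φ‖ • (‖φ‖⁻¹ • φ) := by
    rw [smul_smul, mul_inv_cancel₀ hpos.ne', one_smul]
  rw [this]
  apply Submodule.smul_mem
  apply Submodule.subset_span
  constructor
  · rw [norm_smul, norm_inv, norm_norm, inv_mul_cancel₀ hpos.ne']
  · simp [hφx, hpos.ne']

theorem stmt_0 {X : Type*} [NormedAddCommGroup X] [NormedSpace ℝ X]
    [FiniteDimensional ℝ X] {n i : ℕ}
    (hn : finrank ℝ X = n)
    (hpoly : (extremePoints ℝ (closedBall (0 : X) 1)).Finite)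
    (F : Set X) (hFne : F.Nonempty) (hFconv : Convex ℝ F)
    (hFsub : F ⊆ sphere (0 : X) 1)
    (hface : ∀ x ∈ closedBall (0 : X) 1, ∀ y ∈ closedBall (0 : X) 1,
      ∀ t : ℝ, t ∈ Ioo (0 : ℝ) 1 → (1 - t) • x + t • y ∈ F → x ∈ F ∧ y ∈ F)
    (hi : finrank ℝ (vectorSpan ℝ F) = i)
    (x : X) (hx : x ∈ intrinsicInterior ℝ F) :
    finrank ℝ (Submodule.span ℝ (suppFunctionals x)) = n - i := by
  set B := closedBall (0 : X) 1 with hB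
  have hFB : F ⊆ B := hFsub.trans sphere_subset_closedBall
  have hxF : x ∈ F := intrinsicInterior_subset hx
  have hx1 : ‖x‖ = 1 := by simpa using hFsub hxF
  have hcompl : Convex ℝ (B \ F) := by
    intro a ha b hb s t hs ht hst
    refine ⟨convex_closedBall _ _ ha.1 hb.1 hs ht hst, fun hm => ?_⟩
    rcases hs.eq_or_lt with rfl | hs
    · have : t = 1 := by linarith
      subst this
      simp at hm
      exact hb.2 hm
    rcases ht.eq_or_lt with rfl | ht
    · have : s = 1 := by linarith
      subst this
      simp at hm
      exact ha.2 hm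
    have hs' : s = 1 - t := by linarith
    subst hs'
    exact ha.2 (hface a ha.1 b hb.1 t ⟨ht, by linarith⟩ hm).1
  have hQsub : convexHull ℝ (extremePoints ℝ B \ F) ⊆ B \ F :=
    convexHull_min (sdiff_subset_sdiff_left extremePoints_subset) hcompl
  have hdisj : Disjoint (convexHull ℝ (extremePoints ℝ B \ F)) (affineSpan ℝ F : Set X) := by
    rw [Set.disjoint_left]
    intro q hq hqa
    obtain ⟨ε, hε, hm⟩ := face_relint F x hx q hqa
    have hq' := hQsub hq
    refine hq'.2 (hface _ (hFB hm) q hq'.1 (ε / (1 + ε)) ⟨by positivity, ?_⟩ ?_).2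
    · rw [div_lt_one (by positivity)]; linarith
    · have : (1 - ε / (1 + ε)) • (x + ε • (x - q)) + (ε / (1 + ε)) • q = x := by
        have h1 : (1 - ε / (1 + ε)) = (1 + ε)⁻¹ := by field_simp; ring
        have h2 : ε / (1 + ε) = (1 + ε)⁻¹ * ε := by field_simp
        have h3 : x = (1 + ε)⁻¹ • ((1 + ε) • x) := by
          rw [smul_smul, inv_mul_cancel₀ (by positivity), one_smul]
        conv_rhs => rw [h3]
        rw [h1, h2, mul_smul, ← smul_add]
        congr 1
        module
      rw [this]; exact hxF
  obtain ⟨g, u, v, hgu, huv, hgv⟩ := geometric_hahn_banach_compact_closed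
    (convex_convexHull ℝ _) ((hpoly.subset sdiff_subset).isCompact_convexHull ℝ)
    (affineSpan ℝ F).convex (AffineSubspace.closed_of_finiteDimensional _) hdisj
  have hxa : x ∈ affineSpan ℝ F := subset_affineSpan ℝ F hxF
  have hgW : ∀ w ∈ vectorSpan ℝ F, g w = 0 := by
    intro w hw
    by_contra hne
    have hm : ((v - g x) / g w) • w +ᵥ x ∈ affineSpan ℝ F := by
      apply AffineSubspace.vadd_mem_of_mem_direction _ hxa
      rw [direction_affineSpan]
      exact Submodule.smul_mem _ _ hw
    have := hgv _ hm
    simp [hne] at this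
  have hsub : ∀ f ∈ suppFunctionals x, ∀ w ∈ vectorSpan ℝ F, f w = 0 := by
    intro f hf
    have hle : ∀ y ∈ F, f y ≤ 1 := by
      intro y hy
      have := f.le_opNorm y
      have hy1 : ‖y‖ = 1 := by simpa using hFsub hy
      rw [hf.1, hy1, mul_one] at this
      exact (le_abs_self _).trans this
    have heq : ∀ y ∈ F, f y = 1 := by
      intro y hy
      obtain ⟨ε, hε, hm⟩ := face_relint F x hx y (subset_affineSpan ℝ F hy)
      have h1 := hle _ hm
      have h2 := hle _ hy
      simp only [map_add, map_smul, map_sub, smul_eq_mul, hf.2] at h1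
      nlinarith
    have : vectorSpan ℝ F ≤ LinearMap.ker (f : X →ₗ[ℝ] ℝ) := by
      rw [vectorSpan_def, Submodule.span_le]
      rintro _ ⟨a, ha, b, hb, rfl⟩
      simp [heq a ha, heq b hb]
    intro w hw
    exact this hw
  have hmain : ∀ h : X →L[ℝ] ℝ, (∀ w ∈ vectorSpan ℝ F, h w = 0) →
      ∃ ε : ℝ, 0 < ε ∧ g + ε • h ∈ Submodule.span ℝ (suppFunctionals x) := by
    intro h hh
    have hev : ∀ᶠ ε in nhdsWithin (0 : ℝ) (Ioi 0), ∀ e ∈ extremePoints ℝ B,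
        (g + ε • h) e ≤ (g + ε • h) x := by
      rw [hpoly.eventually_all]
      intro e he
      by_cases heF : e ∈ F
      · have hd : e - x ∈ vectorSpan ℝ F := vsub_mem_vectorSpan ℝ heF hxF
        have h1 := hgW _ hd
        have h2 := hh _ hd
        rw [map_sub, sub_eq_zero] at h1 h2
        exact Filter.Eventually.of_forall fun ε => by simp [h1, h2]
      · have hlt : g e < g x :=
          (hgu e (subset_convexHull ℝ _ ⟨he, heF⟩)).trans (huv.trans (hgv x hxa))
        apply Filter.Eventually.filter_mono nhdsWithin_le_nhds
        have hcont1 : ContinuousAt (fun ε : ℝ => (g + ε • h) e) 0 := by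
          simp only [add_apply, smul_apply]
          fun_prop
        have hcont2 : ContinuousAt (fun ε : ℝ => (g + ε • h) x) 0 := by
          simp only [add_apply, smul_apply]
          fun_prop
        have := hcont1.eventually_lt hcont2 (by simpa using hlt)
        exact this.mono fun _ h => h.le
    obtain ⟨ε, hε, hε0⟩ := (hev.and
      (self_mem_nhdsWithin : Ioi (0 : ℝ) ∈ nhdsWithin 0 (Ioi 0))).exists
    refine ⟨ε, hε0, mem_span_supp x hx1 _ ?_⟩
    intro y hy
    have hBeq := closure_convexHull_extremePoints (isCompact_closedBall (0 : X) 1)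
      (convex_closedBall (0 : X) 1)
    rw [← hBeq] at hy
    have hcl : closure (convexHull ℝ (extremePoints ℝ (closedBall (0 : X) 1))) ⊆
        {z | (g + ε • h) z ≤ (g + ε • h) x} := by
      apply closure_minimal
      · apply convexHull_min
        · intro e he; exact hε e he
        · exact convex_halfSpace_le (g + ε • h).toLinearMap.isLinear _
      · exact isClosed_le (g + ε • h).continuous continuous_const
    exact hcl hy
  have hg : g ∈ Submodule.span ℝ (suppFunctionals x) := by
    obtain ⟨ε, _, h⟩ := hmain 0 (by simp)
    simpa using h
  have hspan : Submodule.span ℝ (suppFunctionals x) =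
      (vectorSpan ℝ F).dualAnnihilator.map
        (LinearMap.toContinuousLinearMap : (X →ₗ[ℝ] ℝ) ≃ₗ[ℝ] (X →L[ℝ] ℝ)).toLinearMap := by
    apply le_antisymm
    · rw [Submodule.span_le]
      intro f hf
      refine ⟨(f : X →ₗ[ℝ] ℝ), ?_, ?_⟩
      · rw [SetLike.mem_coe, Submodule.mem_dualAnnihilator]
        exact hsub f hf
      · ext; simp
    · rintro _ ⟨h, hh, rfl⟩
      rw [SetLike.mem_coe, Submodule.mem_dualAnnihilator] at hh
      obtain ⟨ε, hε, hm⟩ := hmain (LinearMap.toContinuousLinearMap h) (by simpa using hh)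
      have h1 := Submodule.smul_mem _ ε⁻¹ (Submodule.sub_mem _ hm hg)
      rw [add_sub_cancel_left, smul_smul, inv_mul_cancel₀ hε.ne', one_smul] at h1
      exact h1
  have hfin : finrank ℝ (vectorSpan ℝ F) + finrank ℝ (vectorSpan ℝ F).dualAnnihilator =
      finrank ℝ X := Subspace.finrank_add_finrank_dualAnnihilator_eq (vectorSpan ℝ F)
  have hr := LinearEquiv.finrank_map_eq
    (LinearMap.toContinuousLinearMap : (X →ₗ[ℝ] ℝ) ≃ₗ[ℝ] (X →L[ℝ] ℝ))
    (vectorSpan ℝ F).dualAnnihilator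
  rw [hspan]
  refine hr.trans ?_
  rw [hi, hn] at hfin
  exact (Nat.sub_eq_of_eq_add' hfin.symm).symm
end

section
/- Let X = ℓ∞ⁿ and let Y be a two-dimensional real normed linear space. Let T : X → Y be a bounded linear operator with ‖T‖ = 1, rank(T) = 2, and Ext(B_X) ⊆ M_T. Then the image T(B_X) of the closed unit ball has exactly 4 extreme points. -/
open Metric Set Module

lemma aux_ext_Icc (A : ℝ) (hA : 0 < A) : extremePoints ℝ (Icc (-A) A) = {-A, A} := by
  ext x
  constructor
  · rintro ⟨⟨h1, h2⟩, h⟩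
    by_contra hx
    simp only [mem_insert_iff, mem_singleton_iff, not_or] at hx
    have h1' : -A < x := lt_of_le_of_ne h1 (Ne.symm hx.1)
    have h2' : x < A := lt_of_le_of_ne h2 hx.2
    have hs : x ∈ openSegment ℝ (-A) A := by
      rw [openSegment_eq_Ioo (by linarith)]
      exact ⟨h1', h2'⟩
    have := h (left_mem_Icc.2 (by linarith)) (right_mem_Icc.2 (by linarith)) hs
    exact hx.1 this.symm
  · intro hx
    rw [mem_extremePoints_iff_left]
    simp only [mem_insert_iff, mem_singleton_iff] at hx
    refine ⟨by rcases hx with rfl | rfl <;> constructor <;> linarith, ?_⟩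
    rintro y ⟨hy1, hy2⟩ z ⟨hz1, hz2⟩ ⟨a, b, ha, hb, hab, rfl⟩
    simp only [smul_eq_mul] at hx ⊢
    have hb' : b = 1 - a := by linarith
    subst hb'
    rcases hx with hx | hx
    · have : y = -A := by nlinarith
      have : z = -A := by nlinarith
      subst this; nlinarith
    · have : y = A := by nlinarith
      have : z = A := by nlinarith
      subst this; nlinarith

lemma aux_sign_ext {n : ℕ} (ε : Fin n → ℝ) (hε : ∀ i, ε i = 1 ∨ ε i = -1) :
    ε ∈ extremePoints ℝ (closedBall (0 : Fin n → ℝ) 1) := by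
  rw [closedBall_pi _ zero_le_one, extremePoints_pi]
  intro i _
  simp only [Pi.zero_apply, Real.closedBall_eq_Icc, zero_sub, zero_add]
  rw [aux_ext_Icc 1 one_pos]
  rcases hε i with h | h <;> simp [h]

lemma aux_functional {n : ℕ} {Y : Type*} [NormedAddCommGroup Y] [NormedSpace ℝ Y]
    (T : (Fin n → ℝ) →L[ℝ] Y) (hT : ‖T‖ = 1)
    (hMT : extremePoints ℝ (closedBall (0 : Fin n → ℝ) 1) ⊆
      {x ∈ sphere (0 : Fin n → ℝ) 1 | ‖T x‖ = ‖T‖})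
    (ε : Fin n → ℝ) (hε : ∀ i, ε i = 1 ∨ ε i = -1) :
    ∃ f : Y →L[ℝ] ℝ, f ≠ 0 ∧ ∀ i, 0 ≤ ε i * f (T (Pi.single i 1)) := by
  have h1 := (hMT (aux_sign_ext ε hε)).2
  rw [hT] at h1
  obtain ⟨f, hf1, hf2⟩ := exists_dual_vector ℝ (T ε) (by intro h; simp [h] at h1)
  refine ⟨f, by intro h; simp [h] at hf1, fun i => ?_⟩
  have hx : ‖ε - ε i • Pi.single i (1 : ℝ)‖ ≤ 1 := by
    rw [pi_norm_le_iff_of_nonneg zero_le_one]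
    intro j
    by_cases hj : j = i
    · subst hj; simp
    · rcases hε j with h | h <;> simp [hj, h]
  have h2 : f (T (ε - ε i • Pi.single i (1 : ℝ))) ≤ 1 := by
    have := (f.comp T).le_opNorm (ε - ε i • Pi.single i (1 : ℝ))
    have h3 := f.opNorm_comp_le T
    rw [hf1, hT] at h3
    calc _ ≤ ‖f (T (ε - ε i • Pi.single i (1 : ℝ)))‖ := Real.le_norm_self _
      _ ≤ _ := this
      _ ≤ 1 * 1 := by gcongr; linarith
      _ = 1 := by norm_num
  simp only [map_sub, map_smul, smul_eq_mul] at h2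
  rw [hf2, h1] at h2
  simp at h2
  exact h2

lemma aux_image {n : ℕ} (a b : Fin n → ℝ) (hab : ∀ k, a k = 0 ∨ b k = 0)
    (hA : 0 < ∑ k, |a k|) (hB : 0 < ∑ k, |b k|) :
    (fun x : Fin n → ℝ => (∑ k, x k * a k, ∑ k, x k * b k)) '' closedBall 0 1 =
      Icc (-∑ k, |a k|) (∑ k, |a k|) ×ˢ Icc (-∑ k, |b k|) (∑ k, |b k|) := by
  have key : ∀ (x c : Fin n → ℝ), x ∈ closedBall (0 : Fin n → ℝ) 1 →
      |∑ k, x k * c k| ≤ ∑ k, |c k| := by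
    intro x c hx
    rw [mem_closedBall_zero_iff, pi_norm_le_iff_of_nonneg zero_le_one] at hx
    refine (Finset.abs_sum_le_sum_abs _ _).trans (Finset.sum_le_sum fun k _ => ?_)
    rw [abs_mul]
    have := hx k
    rw [Real.norm_eq_abs] at this
    nlinarith [abs_nonneg (c k)]
  ext ⟨s, t⟩
  constructor
  · rintro ⟨x, hx, h⟩
    simp only [Prod.mk.injEq] at h
    rw [← h.1, ← h.2]
    exact ⟨abs_le.1 (key x a hx), abs_le.1 (key x b hx)⟩
  · rintro ⟨hs, ht⟩
    set A := ∑ k, |a k| with hAd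
    set B := ∑ k, |b k| with hBd
    have hs' : |s / A| ≤ 1 := by
      rw [abs_div, abs_of_pos hA, div_le_one hA]; exact abs_le.2 hs
    have ht' : |t / B| ≤ 1 := by
      rw [abs_div, abs_of_pos hB, div_le_one hB]; exact abs_le.2 ht
    have hsg : ∀ r : ℝ, |((SignType.sign r : SignType) : ℝ)| ≤ 1 := by
      intro r
      rcases lt_trichotomy r 0 with h | h | h <;> simp [h]
    refine ⟨fun k => SignType.sign (a k) * (s / A) + SignType.sign (b k) * (t / B), ?_, ?_⟩
    · rw [mem_closedBall_zero_iff, pi_norm_le_iff_of_nonneg zero_le_one]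
      intro k
      rw [Real.norm_eq_abs]
      rcases hab k with h | h
      · simp only [h, sign_zero, SignType.coe_zero, zero_mul, zero_add, abs_mul]
        exact mul_le_one₀ (hsg _) (abs_nonneg _) ht'
      · simp only [h, sign_zero, SignType.coe_zero, zero_mul, add_zero, abs_mul]
        exact mul_le_one₀ (hsg _) (abs_nonneg _) hs'
    · simp only [Prod.mk.injEq]
      constructor
      · have : ∀ k, (SignType.sign (a k) * (s / A) + SignType.sign (b k) * (t / B)) * a k
            = |a k| * (s / A) := by
          intro k
          rcases hab k with h | h
          · simp [h]
          · have h' := sign_mul_self (a k)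
            simp only [h, sign_zero, SignType.coe_zero, zero_mul, add_zero, zero_add]
            linear_combination (s / A) * h'
        simp only [this]
        rw [← Finset.sum_mul, ← hAd]
        field_simp
      · have : ∀ k, (SignType.sign (a k) * (s / A) + SignType.sign (b k) * (t / B)) * b k
            = |b k| * (t / B) := by
          intro k
          rcases hab k with h | h
          · have h' := sign_mul_self (b k)
            simp only [h, sign_zero, SignType.coe_zero, zero_mul, add_zero, zero_add]
            linear_combination (t / B) * h'
          · simp [h]
        simp only [this]
        rw [← Finset.sum_mul, ← hBd]
        field_simp

lemma aux_sgn (r : ℝ) : ∃ e : ℝ, (e = 1 ∨ e = -1) ∧ r = - |r| * e := by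
  rcases le_total 0 r with h | h
  · exact ⟨-1, Or.inr rfl, by rw [abs_of_nonneg h]; ring⟩
  · exact ⟨1, Or.inl rfl, by rw [abs_of_nonpos h]; ring⟩

theorem stmt_1 {n : ℕ} {Y : Type*} [NormedAddCommGroup Y] [NormedSpace ℝ Y]
    [FiniteDimensional ℝ Y] (hY : finrank ℝ Y = 2)
    (T : (Fin n → ℝ) →L[ℝ] Y) (hT : ‖T‖ = 1)
    (hrank : finrank ℝ (LinearMap.range (T : (Fin n → ℝ) →ₗ[ℝ] Y)) = 2)
    (hMT : extremePoints ℝ (closedBall (0 : Fin n → ℝ) 1) ⊆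
      {x ∈ sphere (0 : Fin n → ℝ) 1 | ‖T x‖ = ‖T‖}) :
    (extremePoints ℝ (T '' closedBall (0 : Fin n → ℝ) 1)).encard = 4 := by
  set v : Fin n → Y := fun k => T (Pi.single k 1) with hv
  have hTx : ∀ x, T x = ∑ k, x k • v k := by
    intro x
    conv_lhs => rw [pi_eq_sum_univ' x]
    simp [hv, map_sum]
  have hspan : ∀ w : Y, ∃ q, v q ∉ Submodule.span ℝ {w} := by
    intro w
    by_contra! hcon
    have hle : LinearMap.range (T : (Fin n → ℝ) →ₗ[ℝ] Y) ≤ Submodule.span ℝ {w} := by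
      rintro _ ⟨x, rfl⟩
      change T x ∈ _
      rw [hTx]
      exact Submodule.sum_mem _ fun k _ => Submodule.smul_mem _ _ (hcon k)
    have h1 := Submodule.finrank_mono hle
    have h2 := finrank_span_le_card (R := ℝ) ({w} : Set Y)
    simp only [toFinset_singleton, Finset.card_singleton] at h2
    omega
  obtain ⟨p, hp⟩ := hspan 0
  obtain ⟨q, hq⟩ := hspan (v p)
  have hp0 : v p ≠ 0 := by simpa using hp
  have hli : LinearIndependent ℝ ![v p, v q] := by
    rw [LinearIndependent.pair_iff' hp0]
    intro a h
    exact hq (Submodule.mem_span_singleton.2 ⟨a, h⟩)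
  let bs := basisOfLinearIndependentOfCardEqFinrank hli (by simp [hY])
  have hb0 : bs 0 = v p := by simp [bs]
  have hb1 : bs 1 = v q := by simp [bs]
  let e : Y ≃ₗ[ℝ] ℝ × ℝ := bs.equivFun.trans (LinearEquiv.finTwoArrow ℝ ℝ)
  have he : ∀ y, e y = (bs.repr y 0, bs.repr y 1) := by intro y; simp [e]
  set a : Fin n → ℝ := fun k => bs.repr (v k) 0 with ha
  set b : Fin n → ℝ := fun k => bs.repr (v k) 1 with hb
  have hvk : ∀ k, v k = a k • v p + b k • v q := by
    intro k
    have := bs.sum_repr (v k)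
    rw [Fin.sum_univ_two, hb0, hb1] at this
    exact this.symm
  have hap : a p = 1 := by simp [ha, ← hb0]
  have hbp : b p = 0 := by simp [hb, ← hb0]
  have haq : a q = 0 := by simp [ha, ← hb1]
  have hbq : b q = 1 := by simp [hb, ← hb1]
  have hpq : p ≠ q := by rintro rfl; linarith
  have hab : ∀ k, a k = 0 ∨ b k = 0 := by
    intro k
    by_contra! hk
    have hkp : k ≠ p := by rintro rfl; exact hk.2 hbp
    have hkq : k ≠ q := by rintro rfl; exact hk.1 haq
    obtain ⟨e1, he1, h1⟩ := aux_sgn (a k)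
    obtain ⟨e2, he2, h2⟩ := aux_sgn (b k)
    obtain ⟨f, hf0, hf⟩ := aux_functional T hT hMT
      (fun i => if i = p then e1 else if i = q then e2 else 1)
      (by intro i; split_ifs <;> simp [*])
    have fp := hf p
    have fq := hf q
    have fk := hf k
    simp only [if_true, hpq.symm, hkp, hkq, if_false, one_mul] at fp fq fk
    change 0 ≤ e1 * f (v p) at fp
    change 0 ≤ e2 * f (v q) at fq
    change 0 ≤ f (v k) at fk
    rw [hvk k, map_add, map_smul, map_smul, smul_eq_mul, smul_eq_mul] at fk
    have pa := abs_pos.2 hk.1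
    have pb := abs_pos.2 hk.2
    have fk' : 0 ≤ -(|a k| * (e1 * f (v p))) - |b k| * (e2 * f (v q)) := by
      have : a k * f (v p) + b k * f (v q) = 
          -(|a k| * (e1 * f (v p))) - |b k| * (e2 * f (v q)) := by
        linear_combination f (v p) * h1 + f (v q) * h2
      linarith
    have z1 : e1 * f (v p) = 0 := by
      have := mul_nonneg pa.le fp
      have := mul_nonneg pb.le fq
      have h : |a k| * (e1 * f (v p)) = 0 := by linarith
      exact (mul_eq_zero.1 h).resolve_left pa.ne'
    have z2 : e2 * f (v q) = 0 := by
      have := mul_nonneg pa.le fp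
      have := mul_nonneg pb.le fq
      have h : |b k| * (e2 * f (v q)) = 0 := by linarith
      exact (mul_eq_zero.1 h).resolve_left pb.ne'
    have z1' : f (v p) = 0 := (mul_eq_zero.1 z1).resolve_left (by rcases he1 with h | h <;> simp [h])
    have z2' : f (v q) = 0 := (mul_eq_zero.1 z2).resolve_left (by rcases he2 with h | h <;> simp [h])
    apply hf0
    ext y
    have := bs.sum_repr y
    rw [Fin.sum_univ_two, hb0, hb1] at this
    rw [← this]
    simp [z1', z2']
  have hA : 0 < ∑ k, |a k| :=
    Finset.sum_pos' (fun k _ => abs_nonneg _) ⟨p, Finset.mem_univ _, by simp [hap]⟩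
  have hB : 0 < ∑ k, |b k| :=
    Finset.sum_pos' (fun k _ => abs_nonneg _) ⟨q, Finset.mem_univ _, by simp [hbq]⟩
  have him : e '' (T '' closedBall (0 : Fin n → ℝ) 1) =
      Icc (-∑ k, |a k|) (∑ k, |a k|) ×ˢ Icc (-∑ k, |b k|) (∑ k, |b k|) := by
    rw [← aux_image a b hab hA hB, image_image]
    apply image_congr
    intro x _
    rw [he, hTx]
    simp [map_sum, ha, hb]
  rw [← e.injective.encard_image, image_extremePoints, him, extremePoints_prod,
    aux_ext_Icc _ hA, aux_ext_Icc _ hB, encard_prod, encard_pair (by linarith),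
    encard_pair (by linarith)]
  norm_num
end

section
/- Let X = ℓ∞ⁿ and let Y be a two-dimensional real normed linear space. Let T : X → Y be a bounded linear operator with ‖T‖ = 1, rank(T) = 2, and Ext(B_X) ⊆ M_T. Suppose T(B_X) is the convex hull of {z₁, −z₁, z₂, −z₂} for some z₁, z₂ ∈ Y. Then either for every x ∈ Ext(B_X) the point Tx lies in L[z₁,z₂] ∪ L[−z₁,−z₂], or for every x ∈ Ext(B_X) the point Tx lies in L[z₁,−z₂] ∪ L[−z₁,z₂]. -/
open Metric Set Module

/-- If a functional with coefficients `a` is at most one on the cube and equals one at `v`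
in the cube, then every term is aligned. -/
lemma aux_align {n : ℕ} (a v : Fin n → ℝ) (hv : ∀ i, |v i| ≤ 1)
    (hle : ∀ x : Fin n → ℝ, (∀ i, |x i| ≤ 1) → ∑ i, x i * a i ≤ 1)
    (h1 : ∑ i, v i * a i = 1) (i : Fin n) : v i * a i = |a i| := by
  have hs : ∑ i, |a i| ≤ 1 := by
    have := hle (fun i => SignType.sign (a i)) (by
      intro i
      rcases lt_trichotomy (a i) 0 with h | h | h <;> simp [h])
    simpa [sign_mul_self] using this
  have ht : ∀ j ∈ Finset.univ, v j * a j ≤ |a j| := by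
    intro j _
    calc v j * a j ≤ |v j * a j| := le_abs_self _
      _ = |v j| * |a j| := abs_mul _ _
      _ ≤ 1 * |a j| := by gcongr; exact hv j
      _ = |a j| := one_mul _
  have := Finset.sum_le_sum ht
  exact (Finset.sum_eq_sum_iff_of_le ht).1 (by linarith) i (Finset.mem_univ i)

theorem stmt_2 {n : ℕ} {Y : Type*} [NormedAddCommGroup Y] [NormedSpace ℝ Y]
    [FiniteDimensional ℝ Y] (hY : finrank ℝ Y = 2)
    (T : (Fin n → ℝ) →L[ℝ] Y) (hT : ‖T‖ = 1)
    (hrank : finrank ℝ (LinearMap.range (T : (Fin n → ℝ) →ₗ[ℝ] Y)) = 2)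
    (hMT : extremePoints ℝ (closedBall (0 : Fin n → ℝ) 1) ⊆
      {x ∈ sphere (0 : Fin n → ℝ) 1 | ‖T x‖ = ‖T‖})
    (z₁ z₂ : Y)
    (himg : T '' closedBall (0 : Fin n → ℝ) 1 =
      convexHull ℝ {z₁, -z₁, z₂, -z₂}) :
    (∀ x ∈ extremePoints ℝ (closedBall (0 : Fin n → ℝ) 1),
      T x ∈ segment ℝ z₁ z₂ ∪ segment ℝ (-z₁) (-z₂)) ∨
    (∀ x ∈ extremePoints ℝ (closedBall (0 : Fin n → ℝ) 1),
      T x ∈ segment ℝ z₁ (-z₂) ∪ segment ℝ (-z₁) z₂) := by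
  have hball : ∀ x : Fin n → ℝ, x ∈ closedBall (0 : Fin n → ℝ) 1 ↔ ∀ i, |x i| ≤ 1 := by
    intro x
    rw [mem_closedBall_zero_iff, pi_norm_le_iff_of_nonneg zero_le_one]
    simp
  have hext : extremePoints ℝ (closedBall (0 : Fin n → ℝ) 1) =
      univ.pi (fun _ : Fin n => extremePoints ℝ (closedBall (0 : ℝ) 1)) := by
    rw [closedBall_pi _ zero_le_one, extremePoints_pi]
    rfl
  have hspan : ⊤ ≤ Submodule.span ℝ (range ![z₁, z₂]) := by
    have hr : LinearMap.range (T : (Fin n → ℝ) →ₗ[ℝ] Y) = ⊤ :=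
      Submodule.eq_top_of_finrank_eq (by rw [hrank, hY])
    rw [← hr]
    have m1 : z₁ ∈ Submodule.span ℝ (range ![z₁, z₂]) := Submodule.subset_span ⟨0, rfl⟩
    have m2 : z₂ ∈ Submodule.span ℝ (range ![z₁, z₂]) := Submodule.subset_span ⟨1, rfl⟩
    have hsub : convexHull ℝ {z₁, -z₁, z₂, -z₂} ⊆
        (Submodule.span ℝ (range ![z₁, z₂]) : Set Y) := by
      refine convexHull_min ?_ (Submodule.convex _)
      rintro y (rfl | rfl | rfl | rfl)
      · exact m1
      · exact Submodule.neg_mem _ m1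
      · exact m2
      · exact Submodule.neg_mem _ m2
    rintro _ ⟨x, rfl⟩
    have h1 : (‖x‖ + 1)⁻¹ • x ∈ closedBall (0 : Fin n → ℝ) 1 := by
      rw [mem_closedBall_zero_iff, norm_smul, norm_inv, Real.norm_of_nonneg (by positivity)]
      rw [inv_mul_le_iff₀ (by positivity)]
      linarith
    have h2 := hsub (himg ▸ mem_image_of_mem T h1)
    rw [map_smul] at h2
    have h3 := Submodule.smul_mem _ (‖x‖ + 1) h2
    rwa [smul_inv_smul₀ (by positivity)] at h3
  let b := basisOfTopLeSpanOfCardEqFinrank ![z₁, z₂] hspan (by simp [hY])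
  have hb : ⇑b = ![z₁, z₂] := coe_basisOfTopLeSpanOfCardEqFinrank _ _ _
  have hb0 : b 0 = z₁ := by rw [hb]; rfl
  have hb1 : b 1 = z₂ := by rw [hb]; rfl
  have hrep : ∀ y, y = b.coord 0 y • z₁ + b.coord 1 y • z₂ := by
    intro y
    have := b.sum_repr y
    rw [Fin.sum_univ_two, hb0, hb1] at this
    exact this.symm
  have c00 : b.coord 0 z₁ = 1 := by rw [← hb0]; simp
  have c01 : b.coord 0 z₂ = 0 := by rw [← hb1]; simp
  have c10 : b.coord 1 z₁ = 0 := by rw [← hb0]; simp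
  have c11 : b.coord 1 z₂ = 1 := by rw [← hb1]; simp
  generalize b.coord 0 = p at *
  generalize b.coord 1 = q at *
  clear hb hb0 hb1 b
  -- bounds
  have key : ∀ f : Y →ₗ[ℝ] ℝ, |f z₁| = 1 → |f z₂| = 1 →
      ∀ x ∈ closedBall (0 : Fin n → ℝ) 1, |f (T x)| ≤ 1 := by
    intro f h1 h2 x hx
    have hsub : convexHull ℝ {z₁, -z₁, z₂, -z₂} ⊆ f ⁻¹' (Icc (-1) 1) := by
      refine convexHull_min ?_ ((convex_Icc (-1 : ℝ) 1).linear_preimage f)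
      rintro y (rfl | rfl | rfl | rfl) <;> rw [mem_preimage, mem_Icc, ← abs_le] <;>
        simp [h1, h2]
    exact abs_le.2 (hsub (himg ▸ mem_image_of_mem T hx))
  obtain ⟨v, hv, hvz⟩ : z₁ ∈ T '' closedBall (0 : Fin n → ℝ) 1 :=
    himg ▸ subset_convexHull ℝ _ (by simp)
  obtain ⟨w, hw, hwz⟩ : z₂ ∈ T '' closedBall (0 : Fin n → ℝ) 1 :=
    himg ▸ subset_convexHull ℝ _ (by simp)
  have hn : ∀ x ∈ closedBall (0 : Fin n → ℝ) 1, ‖T x‖ ≤ 1 := by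
    intro x hx
    have := T.le_opNorm x
    rw [hT, one_mul] at this
    exact this.trans (mem_closedBall_zero_iff.1 hx)
  have hz1 : ‖z₁‖ ≤ 1 := hvz ▸ hn v hv
  have hz2 : ‖z₂‖ ≤ 1 := hwz ▸ hn w hw
  have kf := key (p + q) (by simp [c00, c10]) (by simp [c01, c11])
  have kg := key (p - q) (by simp [c00, c10]) (by simp [c01, c11])
  have hsum : ∀ f : Y →ₗ[ℝ] ℝ, ∀ x, f (T x) = ∑ i, x i * f (T (Pi.single i 1)) := by
    intro f x
    have := LinearMap.pi_apply_eq_sum_univ (f ∘ₗ (T : (Fin n → ℝ) →ₗ[ℝ] Y)) x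
    simp only [LinearMap.comp_apply, smul_eq_mul, ContinuousLinearMap.coe_coe] at this
    rw [this]
    refine Finset.sum_congr rfl fun i _ => ?_
    congr 4
    ext j
    simp [Pi.single_apply, eq_comm]
  have hprod : ∀ i, (p + q) (T (Pi.single i 1)) = 0 ∨ (p - q) (T (Pi.single i 1)) = 0 := by
    intro i
    have al : ∀ f : Y →ₗ[ℝ] ℝ, (∀ x ∈ closedBall (0 : Fin n → ℝ) 1, |f (T x)| ≤ 1) →
        ∀ v ∈ closedBall (0 : Fin n → ℝ) 1, f (T v) = 1 →
          v i * f (T (Pi.single i 1)) = |f (T (Pi.single i 1))| := by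
      intro f hf v hv h
      refine aux_align (fun i => f (T (Pi.single i 1))) v ((hball v).1 hv) ?_ ?_ i
      · intro x hx
        rw [← hsum f x]
        exact (abs_le.1 (hf x ((hball x).2 hx))).2
      · rw [← hsum f v, h]
    have a1 := al _ kf v hv (by simp [hvz, c00, c10])
    have a2 := al _ kg v hv (by simp [hvz, c00, c10])
    have a3 := al _ kf w hw (by simp [hwz, c01, c11])
    have a4 := al (-(p - q)) (by intro x hx; simpa [abs_sub_comm] using kg x hx) w hw
      (by simp [hwz, c01, c11])
    rw [LinearMap.neg_apply, abs_neg] at a4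
    generalize (p + q) (T (Pi.single i 1)) = A at *
    generalize (p - q) (T (Pi.single i 1)) = B at *
    by_contra! hAB
    obtain ⟨hA, hB⟩ := hAB
    have hA' := abs_pos.2 hA
    have hB' := abs_pos.2 hB
    have e1 : v i = w i := mul_right_cancel₀ hA (a1.trans a3.symm)
    rw [e1] at a2
    linarith
  by_cases H : ∀ x ∈ extremePoints ℝ (closedBall (0 : Fin n → ℝ) 1), |(p + q) (T x)| = 1
  · left
    intro x hx
    have g1 := abs_le.1 (kg x (extremePoints_subset hx))
    simp only [LinearMap.sub_apply] at g1
    rcases eq_or_eq_neg_of_abs_eq (H x hx) with h | h <;> simp only [LinearMap.add_apply] at h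
    · left
      exact ⟨p (T x), q (T x), by linarith, by linarith, h, (hrep _).symm⟩
    · right
      refine ⟨-p (T x), -q (T x), by linarith, by linarith, by linarith, ?_⟩
      simpa using (hrep (T x)).symm
  · right
    intro y hy
    have f1 := abs_le.1 (kf y (extremePoints_subset hy))
    simp only [LinearMap.add_apply] at f1
    have H' : |(p - q) (T y)| = 1 := by
      by_contra hne
      push Not at H
      obtain ⟨x, hx, hxne⟩ := H
      have fx := lt_of_le_of_ne (kf x (extremePoints_subset hx)) hxne
      have gy := lt_of_le_of_ne (kg y (extremePoints_subset hy)) hne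
      classical
      let u : Fin n → ℝ := fun i => if (p + q) (T (Pi.single i 1)) = 0 then y i else x i
      have hu : u ∈ extremePoints ℝ (closedBall (0 : Fin n → ℝ) 1) := by
        rw [hext] at hx hy ⊢
        intro i hi
        by_cases hc : (p + q) (T (Pi.single i 1)) = 0
        · simpa only [u, if_pos hc] using hy i hi
        · simpa only [u, if_neg hc] using hx i hi
      have hfu : (p + q) (T u) = (p + q) (T x) := by
        rw [hsum _ u, hsum _ x]
        refine Finset.sum_congr rfl fun i _ => ?_
        by_cases hc : (p + q) (T (Pi.single i 1)) = 0
        · rw [hc, mul_zero, mul_zero]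
        · simp only [u, if_neg hc]
      have hgu : (p - q) (T u) = (p - q) (T y) := by
        rw [hsum _ u, hsum _ y]
        refine Finset.sum_congr rfl fun i _ => ?_
        by_cases hc : (p + q) (T (Pi.single i 1)) = 0
        · simp only [u, if_pos hc]
        · rw [(hprod i).resolve_left hc, mul_zero, mul_zero]
      rw [← hfu] at fx
      rw [← hgu] at gy
      have hnu : ‖T u‖ = 1 := (hMT hu).2.trans hT
      have hlt : |p (T u)| + |q (T u)| < 1 := by
        simp only [LinearMap.add_apply, LinearMap.sub_apply, abs_lt] at fx gy
        rcases abs_cases (p (T u)) with h | h <;> rcases abs_cases (q (T u)) with h' | h' <;>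
          linarith
      have : ‖T u‖ ≤ |p (T u)| + |q (T u)| := by
        calc ‖T u‖ = ‖p (T u) • z₁ + q (T u) • z₂‖ := by rw [← hrep]
          _ ≤ ‖p (T u) • z₁‖ + ‖q (T u) • z₂‖ := norm_add_le _ _
          _ = |p (T u)| * ‖z₁‖ + |q (T u)| * ‖z₂‖ := by simp [norm_smul]
          _ ≤ |p (T u)| * 1 + |q (T u)| * 1 := by gcongr
          _ = _ := by ring
      linarith
    rcases eq_or_eq_neg_of_abs_eq H' with h | h <;> simp only [LinearMap.sub_apply] at h
    · left
      refine ⟨p (T y), -q (T y), by linarith, by linarith, by linarith, ?_⟩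
      simpa using (hrep (T y)).symm
    · right
      refine ⟨-p (T y), q (T y), by linarith, by linarith, by linarith, ?_⟩
      simpa using (hrep (T y)).symm
end

section
/- Let F be a face of the closed unit ball of ℓ∞ⁿ (a nonempty convex subset F of the unit ball such that whenever x, y lie in the unit ball, t ∈ (0,1) and (1−t)x + t y ∈ F, then x, y ∈ F) that is contained in the unit sphere, and suppose F has exactly 2^k extreme points. Then F contains exactly k+1 linearly independent extreme points; that is, the dimension of the linear span of Ext(F) equals k + 1. -/
open Metric Set Module

lemma ext_Icc_aux : extremePoints ℝ (Icc (-1 : ℝ) 1) = {-1, 1} := by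
  ext x
  rw [mem_extremePoints]
  simp only [mem_insert_iff, mem_singleton_iff, mem_Icc]
  constructor
  · rintro ⟨⟨h1, h2⟩, h⟩
    by_contra! hne
    have h1' : -1 < x := lt_of_le_of_ne h1 (Ne.symm hne.1)
    have h2' : x < 1 := lt_of_le_of_ne h2 hne.2
    have := h (-1) ⟨by norm_num, by norm_num⟩ 1 ⟨by norm_num, by norm_num⟩
      (by rw [openSegment_eq_Ioo (by norm_num)]; exact ⟨h1', h2'⟩)
    linarith [this.1, this.2]
  · rintro (rfl | rfl)
    · refine ⟨by norm_num, ?_⟩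
      rintro a ⟨ha, ha'⟩ b ⟨hb, hb'⟩ ⟨s, t, hs, ht, hst, he⟩
      simp only [smul_eq_mul] at he
      constructor <;> nlinarith
    · refine ⟨by norm_num, ?_⟩
      rintro a ⟨ha, ha'⟩ b ⟨hb, hb'⟩ ⟨s, t, hs, ht, hst, he⟩
      simp only [smul_eq_mul] at he
      constructor <;> nlinarith

lemma ball_aux {n : ℕ} (x : Fin n → ℝ) :
    x ∈ closedBall (0 : Fin n → ℝ) 1 ↔ ∀ i, |x i| ≤ 1 := by
  rw [mem_closedBall_zero_iff, pi_norm_le_iff_of_nonneg zero_le_one]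
  simp

/-- The structure of a face. -/
lemma face_aux {n : ℕ} (F : Set (Fin n → ℝ)) (hFne : F.Nonempty)
    (hFconv : Convex ℝ F)
    (hFsub : F ⊆ sphere (0 : Fin n → ℝ) 1)
    (hface : ∀ x ∈ closedBall (0 : Fin n → ℝ) 1, ∀ y ∈ closedBall (0 : Fin n → ℝ) 1,
      ∀ t : ℝ, t ∈ Ioo (0 : ℝ) 1 → (1 - t) • x + t • y ∈ F → x ∈ F ∧ y ∈ F) :
    ∃ (J : Finset (Fin n)) (w : Fin n → ℝ), (∀ i, i ∉ J → |w i| = 1) ∧ (∃ i, i ∉ J) ∧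
      F = Set.pi univ (fun i => if i ∈ J then Icc (-1 : ℝ) 1 else {w i}) := by
  classical
  let g : (Fin n → ℝ) → Finset (Fin n) := fun x => Finset.univ.filter (fun i => |x i| < 1)
  have hfin : ((fun x => (g x)) '' F).Finite := Set.toFinite _
  obtain ⟨J, ⟨⟨w, hw, hwJ⟩, hmax⟩⟩ := Set.exists_max_image _ Finset.card hfin (hFne.image _)
  have hball : ∀ x ∈ F, ∀ i, |x i| ≤ 1 := fun x hx =>
    (ball_aux x).1 (sphere_subset_closedBall (hFsub hx))
  have hJ : ∀ i, i ∈ J ↔ |w i| < 1 := by intro i; rw [← hwJ]; simp [g]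
  have hJ' : ∀ i, i ∉ J → |w i| = 1 := by
    intro i hi
    rw [hJ, not_lt] at hi
    exact le_antisymm (hball w hw i) hi
  refine ⟨J, w, hJ', ?_, ?_⟩
  · by_contra! hall
    have h1 : ‖w‖ = 1 := by simpa using hFsub hw
    have : ‖w‖ < 1 := by
      rw [pi_norm_lt_iff zero_lt_one]
      intro i
      exact (hJ i).1 (hall i)
    linarith
  · ext x
    simp only [mem_pi, mem_univ, true_imp_iff]
    constructor
    · intro hx i
      split_ifs with hi
      · exact abs_le.1 (hball x hx i)
      · rw [mem_singleton_iff]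
        by_contra hne
        have hz : (1/2 : ℝ) • w + (1/2 : ℝ) • x ∈ F :=
          hFconv hw hx (by norm_num) (by norm_num) (by norm_num)
        have hlt := hmax _ ⟨_, hz, rfl⟩
        have hss : insert i J ⊆ g ((1/2 : ℝ) • w + (1/2 : ℝ) • x) := by
          intro j hj
          simp only [g, Finset.mem_filter, Finset.mem_univ, true_and, Pi.add_apply,
            Pi.smul_apply, smul_eq_mul]
          have hxj := abs_le.1 (hball x hx j)
          rcases Finset.mem_insert.1 hj with rfl | hj
          · have hwj := abs_le.1 (hball w hw j)
            rcases eq_or_eq_neg_of_abs_eq (hJ' j hi) with h | h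
            · have : x j < 1 := lt_of_le_of_ne hxj.2 (by rw [← h]; exact hne)
              rw [abs_lt]; constructor <;> linarith
            · have : -1 < x j := lt_of_le_of_ne hxj.1 (by rw [← h]; exact Ne.symm hne)
              rw [abs_lt]; constructor <;> linarith
          · have hwj := abs_lt.1 ((hJ j).1 hj)
            rw [abs_lt]; constructor <;> linarith
        have := Finset.card_le_card hss
        rw [Finset.card_insert_of_notMem hi] at this
        simp only at hlt
        omega
    · intro hx
      have hxb : ∀ i, |x i| ≤ 1 := by
        intro i
        have := hx i
        split_ifs at this with hi
        · exact abs_le.2 this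
        · rw [mem_singleton_iff.1 this, hJ' i hi]
      obtain ⟨δ, hδ, hδ'⟩ : ∃ δ : ℝ, 0 < δ ∧ ∀ i ∈ J, 2 * δ ≤ 1 - |w i| := by
        by_cases hne : J.Nonempty
        · obtain ⟨i, hi, hmin⟩ := J.exists_min_image (fun i => 1 - |w i|) hne
          refine ⟨(1 - |w i|) / 2, ?_, fun j hj => ?_⟩
          · have := (hJ i).1 hi
            linarith
          · have := hmin j hj
            linarith
        · refine ⟨1, one_pos, fun i hi => (hne ⟨i, hi⟩).elim⟩
      have hy : w + δ • (w - x) ∈ closedBall (0 : Fin n → ℝ) 1 := by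
        rw [ball_aux]
        intro i
        simp only [Pi.add_apply, Pi.smul_apply, Pi.sub_apply, smul_eq_mul]
        by_cases hi : i ∈ J
        · have h1 := hδ' i hi
          have h2 := abs_le.1 (hxb i)
          have h3 := abs_le.1 (hball w hw i)
          have h4 := abs_le.1 (le_refl |w i|)
          rw [abs_le]; constructor <;> nlinarith
        · have := hx i
          rw [if_neg hi, mem_singleton_iff] at this
          rw [this, sub_self, mul_zero, add_zero, hJ' i hi]
      refine (hface _ hy x ((ball_aux x).2 hxb) (δ / (1 + δ)) ⟨by positivity, ?_⟩ ?_).2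
      · rw [div_lt_one (by positivity)]; linarith
      · convert hw using 1
        ext i
        simp only [Pi.add_apply, Pi.smul_apply, Pi.sub_apply, smul_eq_mul]
        field_simp
        ring

theorem stmt_3 {n k : ℕ} (F : Set (Fin n → ℝ)) (hFne : F.Nonempty)
    (hFconv : Convex ℝ F)
    (hFsub : F ⊆ sphere (0 : Fin n → ℝ) 1)
    (hface : ∀ x ∈ closedBall (0 : Fin n → ℝ) 1, ∀ y ∈ closedBall (0 : Fin n → ℝ) 1,
      ∀ t : ℝ, t ∈ Ioo (0 : ℝ) 1 → (1 - t) • x + t • y ∈ F → x ∈ F ∧ y ∈ F)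
    (hcard : (extremePoints ℝ F).encard = 2 ^ k) :
    finrank ℝ (Submodule.span ℝ (extremePoints ℝ F)) = k + 1 := by
  classical
  obtain ⟨J, w, hw, ⟨i0, hi0⟩, hF⟩ := face_aux F hFne hFconv hFsub hface
  have hE : extremePoints ℝ F =
      Set.pi univ (fun i => if i ∈ J then ({-1, 1} : Set ℝ) else {w i}) := by
    rw [hF, extremePoints_pi]
    congr 1
    ext1 i
    split_ifs
    · exact ext_Icc_aux
    · simp
  have hk : k = J.card := by
    have h1 : extremePoints ℝ F =
        ↑(Fintype.piFinset (fun i => if i ∈ J then ({-1, 1} : Finset ℝ) else {w i})) := by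
      rw [hE, Fintype.coe_piFinset]
      congr 1
      ext1 i
      split_ifs <;> simp
    rw [h1, Set.encard_coe_eq_coe_finsetCard, Fintype.card_piFinset] at hcard
    have h2 : ∀ i, (if i ∈ J then ({-1, 1} : Finset ℝ) else {w i}).card
        = if i ∈ J then 2 else 1 := by
      intro i
      split_ifs
      · exact Finset.card_pair (by norm_num)
      · simp
    simp only [h2, Finset.prod_ite_mem, Finset.univ_inter, Finset.prod_const] at hcard
    have h3 : 2 ^ J.card = 2 ^ k := by exact_mod_cast hcard
    exact (Nat.pow_right_injective le_rfl h3).symm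
  have hmem : ∀ x : Fin n → ℝ, (∀ i ∈ J, x i = -1 ∨ x i = 1) → (∀ i, i ∉ J → x i = w i) →
      x ∈ Submodule.span ℝ (extremePoints ℝ F) := by
    intro x h1 h2
    apply Submodule.subset_span
    rw [hE]
    intro i _
    simp only
    split_ifs with hi
    · simpa using h1 i hi
    · simpa using h2 i hi
  let T : ((J → ℝ) × ℝ) →ₗ[ℝ] (Fin n → ℝ) :=
    { toFun := fun p i => if h : i ∈ J then p.1 ⟨i, h⟩ else p.2 * w i
      map_add' := by
        intro p q; ext i; by_cases h : i ∈ J <;> simp [h]; ring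
      map_smul' := by
        intro c p; ext i; by_cases h : i ∈ J <;> simp [h]; ring }
  have hT : ∀ p i, T p i = if h : i ∈ J then p.1 ⟨i, h⟩ else p.2 * w i := fun _ _ => rfl
  have hw0 : w i0 ≠ 0 := by
    intro h; have := hw i0 hi0; rw [h] at this; simp at this
  have hinj : Function.Injective T := by
    intro p q hpq
    ext1
    · ext ⟨i, hi⟩
      have := congrFun hpq i
      simpa [hT, hi] using this
    · have := congrFun hpq i0
      simpa [hT, hi0, hw0] using this
  have hspan : Submodule.span ℝ (extremePoints ℝ F) = LinearMap.range T := by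
    apply le_antisymm
    · rw [Submodule.span_le]
      intro x hx
      rw [hE] at hx
      refine ⟨(fun j => x j, 1), ?_⟩
      ext i
      rw [hT]
      split_ifs with hi
      · rfl
      · have := hx i trivial
        simp only [if_neg hi, mem_singleton_iff] at this
        simp [this]
    · rintro _ ⟨⟨v, c⟩, rfl⟩
      let p : Fin n → ℝ := fun i => if i ∈ J then 1 else w i
      let q : Fin n → ℝ := fun i => if i ∈ J then -1 else w i
      have hp : p ∈ Submodule.span ℝ (extremePoints ℝ F) :=
        hmem p (fun i hi => by simp [p, hi]) (fun i hi => by simp [p, hi])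
      have hq : q ∈ Submodule.span ℝ (extremePoints ℝ F) :=
        hmem q (fun i hi => by simp [q, hi]) (fun i hi => by simp [q, hi])
      have hr : ∀ j : J, (Pi.single (j : Fin n) (1 : ℝ) : Fin n → ℝ) ∈
          Submodule.span ℝ (extremePoints ℝ F) := by
        intro j
        have h1 : Function.update p j (-1) ∈ Submodule.span ℝ (extremePoints ℝ F) := by
          apply hmem
          · intro i hi
            by_cases hij : i = j
            · subst hij; simp
            · simp [hij, p, hi]
          · intro i hi
            have hij : i ≠ j := fun h => hi (h ▸ j.2)
            simp [hij, p, hi]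
        have h2 := Submodule.smul_mem _ (1/2 : ℝ) (Submodule.sub_mem _ hp h1)
        convert h2 using 1
        ext i
        by_cases hij : i = j
        · subst hij; simp [p]; norm_num
        · simp [hij]
      have : T (v, c) = (c / 2) • (p + q) + ∑ j : J, v j • (Pi.single (j : Fin n) (1 : ℝ)) := by
        ext i
        rw [hT]
        simp only [Pi.add_apply, Pi.smul_apply, Finset.sum_apply, smul_eq_mul]
        split_ifs with hi
        · rw [Finset.sum_eq_single ⟨i, hi⟩]
          · simp [p, q, hi]
          · intro b _ hb
            have : i ≠ b := fun h => hb (Subtype.ext h.symm)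
            simp [this]
          · simp
        · rw [Finset.sum_eq_zero]
          · simp [p, q, hi]; ring
          · intro b _
            have : i ≠ b := fun h => hi (h ▸ b.2)
            simp [this]
      rw [this]
      exact Submodule.add_mem _ (Submodule.smul_mem _ _ (Submodule.add_mem _ hp hq))
        (Submodule.sum_mem _ fun j _ => Submodule.smul_mem _ _ (hr j))
  rw [hspan, LinearMap.finrank_range_of_inj hinj, hk]
  simp
end

section
/- Let X = ℓ∞ⁿ and let Y be a two-dimensional real normed linear space. Let T : X → Y be a bounded linear operator with ‖T‖ = 1 such that Ext(B_X) ⊆ M_T and Tx is smooth for every x ∈ Ext(B_X). If rank(T) = 1, then T is n-smooth, i.e., dim span J(T) = n. -/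
open Metric Set Module

/-- A point is smooth if it has a unique supporting functional. -/
def IsSmoothPoint {E : Type*} [NormedAddCommGroup E] [NormedSpace ℝ E] (x : E) : Prop :=
  ∃ g, suppFunctionals x = {g}

open Filter Topology in
/-- A supporting functional of `T` is dominated at `S` by some `g (S x)` with `g (T x) = 1`. -/
theorem aux_dom {X Y : Type*} [NormedAddCommGroup X] [NormedSpace ℝ X] [FiniteDimensional ℝ X]
    [NormedAddCommGroup Y] [NormedSpace ℝ Y] [FiniteDimensional ℝ Y]
    (T S : X →L[ℝ] Y) (hT : ‖T‖ = 1) (F : (X →L[ℝ] Y) →L[ℝ] ℝ) (hF : F ∈ suppFunctionals T) :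
    ∃ (x : X) (g : Y →L[ℝ] ℝ), ‖x‖ ≤ 1 ∧ ‖g‖ ≤ 1 ∧ g (T x) = 1 ∧ F S ≤ g (S x) := by
  obtain ⟨hF1, hF2⟩ := hF
  have hatt : ∀ A : X →L[ℝ] Y, ∃ (x : X) (g : Y →L[ℝ] ℝ), ‖x‖ ≤ 1 ∧ ‖g‖ ≤ 1 ∧ ‖A‖ ≤ g (A x) := by
    intro A
    have : ProperSpace X := FiniteDimensional.proper ℝ X
    obtain ⟨x, hx, hmax⟩ := (isCompact_closedBall (0 : X) 1).exists_isMaxOn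
      ⟨0, by simp⟩ (f := fun x => ‖A x‖) (by fun_prop)
    obtain ⟨g, hg1, hg2⟩ := exists_dual_vector'' ℝ (A x)
    refine ⟨x, g, by simpa using hx, hg1, ?_⟩
    rw [hg2]
    refine A.opNorm_le_of_unit_norm (by positivity) ?_
    intro z hz
    exact hmax (by simp [hz])
  choose x g hx hg hA using fun k : ℕ => hatt (T + (1 / ((k : ℝ) + 1)) • S)
  have : ProperSpace X := FiniteDimensional.proper ℝ X
  have : ProperSpace (Y →L[ℝ] ℝ) := FiniteDimensional.proper ℝ _
  have hcomp := (isCompact_closedBall (0 : X) 1).prod (isCompact_closedBall (0 : Y →L[ℝ] ℝ) 1)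
  obtain ⟨⟨x0, g0⟩, h0, φ, hφ, hlim⟩ := hcomp.tendsto_subseq (x := fun k => (x k, g k))
    (fun k => by simp [hx, hg])
  have hlx : Tendsto (fun k => x (φ k)) atTop (𝓝 x0) :=
    (continuous_fst.tendsto _).comp hlim
  have hlg : Tendsto (fun k => g (φ k)) atTop (𝓝 g0) :=
    (continuous_snd.tendsto _).comp hlim
  have happ : ∀ A : X →L[ℝ] Y, Tendsto (fun k => g (φ k) (A (x (φ k)))) atTop (𝓝 (g0 (A x0))) :=
    by
    intro A
    have hc : Continuous fun p : X × (Y →L[ℝ] ℝ) => p.2 (A p.1) := by fun_prop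
    exact (hc.tendsto (x0, g0)).comp hlim
  have hbd : ∀ k, ∀ A : X →L[ℝ] Y, |g k (A (x k))| ≤ ‖A‖ := by
    intro k A
    calc |g k (A (x k))| ≤ ‖g k‖ * ‖A (x k)‖ := (g k).le_opNorm _
      _ ≤ 1 * (‖A‖ * ‖x k‖) := by gcongr; exact hg k; exact A.le_opNorm _
      _ ≤ 1 * (‖A‖ * 1) := by gcongr; exact hx k
      _ = ‖A‖ := by ring
  have hmain : ∀ k : ℕ, 1 + (1 / ((k : ℝ) + 1)) * F S
      ≤ g k (T (x k)) + (1 / ((k : ℝ) + 1)) * g k (S (x k)) := by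
    intro k
    have h1 := hA k
    have h2 : F (T + (1 / ((k : ℝ) + 1)) • S) ≤ ‖T + (1 / ((k : ℝ) + 1)) • S‖ := by
      have := F.le_opNorm (T + (1 / ((k : ℝ) + 1)) • S)
      rw [hF1, one_mul] at this
      exact (le_abs_self _).trans this
    have h3 := h2.trans h1
    simpa [hF2] using h3
  have hx0 : ‖x0‖ ≤ 1 := by simpa using h0.1
  have hg0 : ‖g0‖ ≤ 1 := by simpa using h0.2
  have hS : ∀ k, F S ≤ g k (S (x k)) := by
    intro k
    have h1 := hmain k
    have h2 := (abs_le.1 (hbd k T)).2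
    rw [hT] at h2
    have hp : 0 < 1 / ((k : ℝ) + 1) := by positivity
    refine le_of_mul_le_mul_left ?_ hp
    linarith
  refine ⟨x0, g0, hx0, hg0, ?_, ge_of_tendsto' (happ S) (fun k => hS _)⟩
  have hz : Tendsto (fun k => 1 / ((φ k : ℝ) + 1)) atTop (𝓝 0) :=
    (tendsto_one_div_add_atTop_nhds_zero_nat (𝕜 := ℝ)).comp hφ.tendsto_atTop
  have hl1 : Tendsto (fun k => 1 + (1 / ((φ k : ℝ) + 1)) * F S) atTop (𝓝 (1 + 0 * F S)) :=
    (hz.mul_const _).const_add _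
  have hl2 := (happ T).add (hz.mul (happ S))
  have h1 := le_of_tendsto_of_tendsto' hl1 hl2 (fun k => hmain (φ k))
  have h2 : g0 (T x0) ≤ 1 := le_of_tendsto' (happ T) (fun k => by
    have := (abs_le.1 (hbd (φ k) T)).2
    rwa [hT] at this)
  linarith

theorem aux_sum {n : ℕ} (x : Fin n → ℝ) : x = ∑ i, x i • Pi.single i (1 : ℝ) := by
  classical
  funext j
  simp [Finset.sum_apply, Pi.single_apply]

theorem aux_lin {n : ℕ} (f : (Fin n → ℝ) →ₗ[ℝ] ℝ) (x : Fin n → ℝ) :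
    f x = ∑ i, x i * f (Pi.single i 1) := by
  conv_lhs => rw [aux_sum x]
  simp only [map_sum, map_smul, smul_eq_mul]

theorem aux_ext {n : ℕ} (x : Fin n → ℝ) (hx : ∀ i, x i = 1 ∨ x i = -1) :
    x ∈ extremePoints ℝ (closedBall (0 : Fin n → ℝ) 1) := by
  have hb : ∀ y : Fin n → ℝ, y ∈ closedBall (0 : Fin n → ℝ) 1 ↔ ∀ i, |y i| ≤ 1 := by
    intro y
    rw [mem_closedBall_zero_iff, pi_norm_le_iff_of_nonneg zero_le_one]
    rfl
  rw [mem_extremePoints]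
  refine ⟨(hb x).2 fun i => by rcases hx i with h | h <;> simp [h], ?_⟩
  rintro y hy z hz ⟨a, b, ha, hb', hab, h⟩
  rw [hb] at hy hz
  have key : ∀ i, y i = x i ∧ z i = x i := by
    intro i
    have h1 := congrFun h i
    simp only [Pi.add_apply, Pi.smul_apply, smul_eq_mul] at h1
    have h2 := abs_le.1 (hy i)
    have h3 := abs_le.1 (hz i)
    obtain rfl : b = 1 - a := by linarith
    rcases hx i with h' | h' <;> rw [h'] at h1 ⊢ <;> constructor <;> nlinarith
  exact ⟨funext fun i => (key i).1, funext fun i => (key i).2⟩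

theorem stmt_4 {n : ℕ} {Y : Type*} [NormedAddCommGroup Y] [NormedSpace ℝ Y]
    [FiniteDimensional ℝ Y] (hY : finrank ℝ Y = 2)
    (T : (Fin n → ℝ) →L[ℝ] Y) (hT : ‖T‖ = 1)
    (hMT : extremePoints ℝ (closedBall (0 : Fin n → ℝ) 1) ⊆
      {x ∈ sphere (0 : Fin n → ℝ) 1 | ‖T x‖ = ‖T‖})
    (hsm : ∀ x ∈ extremePoints ℝ (closedBall (0 : Fin n → ℝ) 1), IsSmoothPoint (T x))
    (hrank : finrank ℝ (LinearMap.range (T : (Fin n → ℝ) →ₗ[ℝ] Y)) = 1) :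
    finrank ℝ (Submodule.span ℝ (suppFunctionals T)) = n := by
  classical
  -- structure of T
  have hstruct : ∃ (i0 : Fin n) (w : Y), ∀ x, T x = x i0 • w := by
    obtain ⟨⟨v, hv⟩, hv0, hspan⟩ := finrank_eq_one_iff'.1 hrank
    have hspan' : ∀ x, ∃ c : ℝ, T x = c • v := by
      intro x
      obtain ⟨c, hc⟩ := hspan ⟨T x, ⟨x, rfl⟩⟩
      exact ⟨c, (congrArg Subtype.val hc).symm⟩
    have hv0' : v ≠ 0 := fun h => hv0 (Subtype.ext h)
    choose c hc using hspan'
    have hadd : ∀ x y, c (x + y) = c x + c y := by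
      intro x y
      apply smul_left_injective ℝ hv0'
      simp only [add_smul, ← hc, map_add]
    have hsmul : ∀ (r : ℝ) x, c (r • x) = r * c x := by
      intro r x
      apply smul_left_injective ℝ hv0'
      simp only [mul_smul, ← hc, map_smul]
    let cl : (Fin n → ℝ) →ₗ[ℝ] ℝ := { toFun := c, map_add' := hadd, map_smul' := hsmul }
    have hcl : ∀ x, T x = cl x • v := hc
    have hsum : ∀ x : Fin n → ℝ, cl x = ∑ i, x i * cl (Pi.single i 1) := by
      exact aux_lin cl
    have hne : ∃ i0, cl (Pi.single i0 1) ≠ 0 := by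
      by_contra! hcon
      have : T = 0 := by
        ext1 x
        rw [hcl, hsum]
        simp [hcon]
      simp [this] at hT
    obtain ⟨i0, hi0⟩ := hne
    have hsq : ∀ x : Fin n → ℝ, (∀ i, x i = 1 ∨ x i = -1) → (cl x * ‖v‖) ^ 2 = 1 := by
      intro x hx
      have h1 := (hMT (aux_ext x hx)).2
      rw [hT, hcl, norm_smul, Real.norm_eq_abs] at h1
      rw [mul_pow, ← sq_abs (cl x), ← mul_pow, h1, one_pow]
    have hvn : ‖v‖ ≠ 0 := norm_ne_zero_iff.2 hv0'
    have hj : ∀ j, j ≠ i0 → cl (Pi.single j 1) = 0 := by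
      intro j hj
      have q1 := hsq 1 (by simp)
      have q2 := hsq (1 - (2:ℝ) • Pi.single i0 1) (by
        intro i; by_cases h : i = i0 <;> simp [h]; norm_num)
      have q3 := hsq (1 - (2:ℝ) • Pi.single j 1) (by
        intro i; by_cases h : i = j <;> simp [h]; norm_num)
      have q4 := hsq (1 - (2:ℝ) • Pi.single i0 1 - (2:ℝ) • Pi.single j 1) (by
        intro i
        by_cases h : i = i0
        · subst h; simp [hj.symm]; norm_num
        · by_cases h' : i = j
          · subst h'; simp [hj]; norm_num
          · simp [h, h'])
      simp only [map_sub, map_smul, smul_eq_mul] at q2 q3 q4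
      set P := cl 1
      set a := cl (Pi.single i0 1)
      set b := cl (Pi.single j 1)
      have e1 : (a * ‖v‖ ^ 2) * (P - a) = 0 := by linarith
      have e2 : (a * ‖v‖ ^ 2) * (P - 2 * b - a) = 0 := by linarith
      have hne : a * ‖v‖ ^ 2 ≠ 0 := mul_ne_zero hi0 (pow_ne_zero _ hvn)
      have e1' := (mul_eq_zero.1 e1).resolve_left hne
      have e2' := (mul_eq_zero.1 e2).resolve_left hne
      linarith
    refine ⟨i0, cl (Pi.single i0 1) • v, fun x => ?_⟩
    rw [hcl, hsum, Finset.sum_eq_single i0, mul_smul]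
    · intro j _ h; rw [hj j h, mul_zero]
    · simp
  obtain ⟨i0, w, hw⟩ := hstruct
  have h1ext := aux_ext (1 : Fin n → ℝ) (by simp)
  obtain ⟨g, hg⟩ := hsm 1 h1ext
  have hT1 : T 1 = w := by simp [hw]
  rw [hT1] at hg
  have hwn : ‖w‖ = 1 := by
    have := (hMT h1ext).2
    rwa [hT1, hT] at this
  have hgm : g ∈ suppFunctionals w := by rw [hg]; rfl
  obtain ⟨hg1, hgw⟩ := hgm
  have huniq : ∀ g' : Y →L[ℝ] ℝ, ‖g'‖ ≤ 1 → g' w = 1 → g' = g := by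
    intro g' h1 h2
    have : g' ∈ suppFunctionals w := by
      refine ⟨le_antisymm h1 ?_, h2⟩
      have := g'.le_opNorm w
      rw [h2, hwn] at this
      simpa using this
    rw [hg] at this
    exact this
  -- functionals vanish
  have hle : ∀ F ∈ suppFunctionals T, ∀ S : (Fin n → ℝ) →L[ℝ] Y, (∀ x, g (S x) = 0) → F S ≤ 0 := by
    intro F hF S hS
    obtain ⟨x, g', hx, hg', h1, h2⟩ := aux_dom T S hT F hF
    rw [hw, map_smul, smul_eq_mul] at h1
    have hxi : |x i0| ≤ 1 := (norm_le_pi_norm x i0).trans hx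
    have hgi : |g' w| ≤ 1 := by
      have := g'.le_opNorm w
      rw [hwn, mul_one] at this
      exact this.trans hg'
    rw [abs_le] at hxi hgi
    have hor : g' w = 1 ∨ (-g') w = 1 := by
      rcases le_total 0 (g' w) with h | h
      · left; nlinarith
      · right; simp only [neg_apply]; nlinarith
    rcases hor with h | h
    · rw [huniq g' hg' h, hS] at h2; exact h2
    · have := huniq (-g') (by simpa using hg') h
      have h3 : g' (S x) = 0 := by
        rw [← neg_eq_zero, ← neg_apply, this, hS]
      rw [h3] at h2; exact h2
  have hzero : ∀ F ∈ suppFunctionals T, ∀ S : (Fin n → ℝ) →L[ℝ] Y,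
      (∀ x, g (S x) = 0) → F S = 0 := by
    intro F hF S hS
    have h1 := hle F hF S hS
    have h2 := hle F hF (-S) (by simp [hS])
    rw [map_neg] at h2
    linarith
  let Φ : (Fin n → ℝ) →ₗ[ℝ] (((Fin n → ℝ) →L[ℝ] Y) →L[ℝ] ℝ) :=
    { toFun := fun x => g.comp (ContinuousLinearMap.apply ℝ Y x)
      map_add' := by intro x y; ext S; simp
      map_smul' := by intro r x; ext S; simp }
  have hΦ : ∀ x S, Φ x S = g (S x) := fun x S => rfl
  let R : Fin n → ((Fin n → ℝ) →L[ℝ] Y) := fun i =>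
    (ContinuousLinearMap.proj (R := ℝ) (φ := fun _ : Fin n => ℝ) i).smulRight w
  have hR : ∀ i x, R i x = x i • w := fun i x => rfl
  have hinj : Function.Injective Φ := by
    refine (injective_iff_map_eq_zero Φ).2 ?_
    intro x hx
    funext i
    have : Φ x (R i) = 0 := by rw [hx]; rfl
    simpa [hΦ, hR, hgw] using this
  have hspan : Submodule.span ℝ (suppFunctionals T) = LinearMap.range Φ := by
    apply le_antisymm
    · rw [Submodule.span_le]
      intro F hF
      refine ⟨fun i => F (R i), ?_⟩
      ext S
      have h0 := hzero F hF (S - ∑ i, g (S (Pi.single i 1)) • R i) (by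
        intro x
        have hx : g (S x) = ∑ i, x i * g (S (Pi.single i 1)) :=
          aux_lin ((g.comp S : (Fin n → ℝ) →L[ℝ] ℝ) : (Fin n → ℝ) →ₗ[ℝ] ℝ) x
        simp [hR, hgw, hx, mul_comm])
      rw [map_sub, sub_eq_zero] at h0
      rw [hΦ, h0]
      have hx : ∀ x, g (S x) = ∑ i, x i * g (S (Pi.single i 1)) :=
        aux_lin ((g.comp S : (Fin n → ℝ) →L[ℝ] ℝ) : (Fin n → ℝ) →ₗ[ℝ] ℝ)
      rw [hx]
      simp [mul_comm]
    · have hmem : ∀ x : Fin n → ℝ, ‖x‖ ≤ 1 → x i0 = 1 → Φ x ∈ suppFunctionals T := by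
        intro x hx hx1
        have hv : Φ x T = 1 := by simp [hΦ, hw, hx1, hgw]
        refine ⟨le_antisymm ?_ ?_, hv⟩
        · refine ContinuousLinearMap.opNorm_le_bound _ zero_le_one fun S => ?_
          rw [hΦ]
          calc ‖g (S x)‖ ≤ ‖g‖ * ‖S x‖ := g.le_opNorm _
            _ ≤ 1 * (‖S‖ * ‖x‖) := by rw [hg1]; gcongr; exact S.le_opNorm _
            _ ≤ 1 * (‖S‖ * 1) := by gcongr
            _ = 1 * ‖S‖ := by ring
        · have := (Φ x).le_opNorm T
          rw [hv, hT] at this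
          simpa using this
      have hm0 : Φ (Pi.single i0 1) ∈ Submodule.span ℝ (suppFunctionals T) :=
        Submodule.subset_span (hmem _ (by simp [Pi.norm_single]) (by simp))
      have hmi : ∀ i, Φ (Pi.single i 1) ∈ Submodule.span ℝ (suppFunctionals T) := by
        intro i
        by_cases h : i = i0
        · rw [h]; exact hm0
        · have h1 : Φ (Pi.single i0 1 + Pi.single i 1) ∈ Submodule.span ℝ (suppFunctionals T) := by
            refine Submodule.subset_span (hmem _ ?_ (by simp [Ne.symm h]))
            rw [pi_norm_le_iff_of_nonneg zero_le_one]
            intro k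
            by_cases hk : k = i0
            · subst hk; simp [Ne.symm h]
            · by_cases hk' : k = i
              · subst hk'; simp [h]
              · simp [hk, hk']
          have h2 := Submodule.sub_mem _ h1 hm0
          rwa [map_add, add_sub_cancel_left] at h2
      rintro _ ⟨x, rfl⟩
      have hx : x = ∑ i, x i • Pi.single i (1 : ℝ) := aux_sum x
      rw [hx, map_sum]
      refine Submodule.sum_mem _ fun i _ => ?_
      rw [map_smul]
      exact Submodule.smul_mem _ _ (hmi i)
  rw [hspan, LinearMap.finrank_range_of_inj hinj]
  simp
end

section
/- Let X = ℓ∞ⁿ and let Y be a two-dimensional real normed linear space that is strictly convex and smooth (i.e., every y ∈ S_Y has exactly one supporting functional: J(y) is a singleton for every y ∈ S_Y). Let T : X → Y be a bounded linear operator with ‖T‖ = 1 such that Ext(B_X) ⊆ M_T. If rank(T) = 2, then T is (2n−2)-smooth, i.e., dim span J(T) = 2n − 2. -/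
open Metric Set Module

namespace Stmt7

def IsSign {n : ℕ} (ε : Fin n → ℝ) : Prop := ∀ j, ε j = 1 ∨ ε j = -1

lemma IsSign.ext {n : ℕ} {ε : Fin n → ℝ} (h : IsSign ε) :
    ε ∈ extremePoints ℝ (closedBall (0 : Fin n → ℝ) 1) := by
  have key : ∀ x ∈ closedBall (0 : Fin n → ℝ) 1, ∀ j, -1 ≤ x j ∧ x j ≤ 1 := by
    intro x hx j
    rw [mem_closedBall_zero_iff] at hx
    have := (norm_le_pi_norm x j).trans hx
    rw [Real.norm_eq_abs] at this
    exact abs_le.1 this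
  refine ⟨?_, ?_⟩
  · rw [mem_closedBall_zero_iff, pi_norm_le_iff_of_nonneg zero_le_one]
    intro j
    rcases h j with h | h <;> simp [h]
  · rintro x hx y hy ⟨a, b, ha, hb, hab, rfl⟩
    ext j
    have h1 := key x hx j
    have h2 := key y hy j
    have h3 := h j
    simp only [Pi.add_apply, Pi.smul_apply, smul_eq_mul] at h3 ⊢
    have hb' : b = 1 - a := by linarith
    subst hb'
    rcases h3 with h3 | h3
    · have : x j = 1 := by nlinarith
      linarith
    · have : x j = -1 := by nlinarith
      linarith

lemma IsSign.update {n : ℕ} {ε : Fin n → ℝ} (h : IsSign ε) (j : Fin n) {c : ℝ}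
    (hc : c = 1 ∨ c = -1) : IsSign (Function.update ε j c) := by
  intro i
  by_cases hi : i = j
  · subst hi; simpa using hc
  · simpa [hi] using h i

variable {n : ℕ} {Y : Type*} [NormedAddCommGroup Y] [NormedSpace ℝ Y]

lemma update_eq (ε : Fin n → ℝ) (j : Fin n) :
    Function.update ε j (-ε j) = ε - (2 * ε j) • (Pi.single j 1 : Fin n → ℝ) := by
  ext i
  by_cases hi : i = j
  · subst hi; simp; ring
  · simp [hi]

lemma pos_of_supp [StrictConvexSpace ℝ Y] (T : (Fin n → ℝ) →L[ℝ] Y)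
    (hN : ∀ ε, IsSign ε → ‖T ε‖ = 1) {ε : Fin n → ℝ} (hε : IsSign ε)
    {f : Y →L[ℝ] ℝ} (hf : f ∈ suppFunctionals (T ε)) {j : Fin n}
    (hj : T (Pi.single j 1) ≠ 0) : 0 < ε j * f (T (Pi.single j 1)) := by
  obtain ⟨hf1, hf2⟩ := hf
  have hs : IsSign (Function.update ε j (-ε j)) := by
    apply hε.update
    rcases hε j with h | h <;> simp [h]
  have h1 := hN _ hs
  have h0 := hN _ hε
  have hT : T (Function.update ε j (-ε j)) = T ε - (2 * ε j) • T (Pi.single j 1) := by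
    rw [update_eq, map_sub, map_smul]
  have hfT : f (T (Function.update ε j (-ε j))) = 1 - 2 * (ε j * f (T (Pi.single j 1))) := by
    rw [hT, map_sub, map_smul, hf2, smul_eq_mul]; ring
  have hle : ∀ y, f y ≤ ‖y‖ := fun y => by
    have := (le_abs_self _).trans (f.le_opNorm y)
    rwa [hf1, one_mul] at this
  have h2 := hle (T (Function.update ε j (-ε j)))
  rw [h1, hfT] at h2
  rcases (show 0 ≤ ε j * f (T (Pi.single j 1)) by linarith).lt_or_eq with h | h
  · exact h
  exfalso
  have h3 := hle (T ε + T (Function.update ε j (-ε j)))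
  rw [map_add, hfT, hf2] at h3
  have h4 := norm_add_le (T ε) (T (Function.update ε j (-ε j)))
  have h5 := eq_of_norm_eq_of_norm_add_eq (h0.trans h1.symm) (le_antisymm h4 (by linarith))
  rw [hT] at h5
  have h6 : (2 * ε j) • T (Pi.single j 1) = 0 := sub_eq_self.1 h5.symm
  rcases smul_eq_zero.1 h6 with h7 | h7
  · rcases hε j with h | h <;> rw [h] at h7 <;> norm_num at h7
  · exact hj h7

lemma T_eq_sum (T : (Fin n → ℝ) →L[ℝ] Y) (x : Fin n → ℝ) :
    T x = ∑ j, x j • T (Pi.single j 1) := by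
  conv_lhs => rw [pi_eq_sum_univ' x]
  simp [map_sum, map_smul]

lemma linInd [StrictConvexSpace ℝ Y]
    (hYsmooth : ∀ y ∈ sphere (0 : Y) 1, ∃ g, suppFunctionals y = {g})
    (T : (Fin n → ℝ) →L[ℝ] Y)
    (hN : ∀ ε, IsSign ε → ‖T ε‖ = 1) :
    LinearIndependent ℝ (fun j : {j : Fin n // T (Pi.single j 1) ≠ 0} =>
      T (Pi.single j.1 1)) := by
  classical
  rw [Fintype.linearIndependent_iff]
  intro c hc
  by_contra! hne
  obtain ⟨i, hi⟩ := hne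
  let ε : Fin n → ℝ := fun j => if h : T (Pi.single j 1) ≠ 0 then
    (if 0 ≤ c ⟨j, h⟩ then 1 else -1) else 1
  have hε : IsSign ε := by
    intro j
    simp only [ε]
    split_ifs <;> simp
  obtain ⟨f, hf⟩ := hYsmooth (T ε) (by simpa using hN ε hε)
  have hf : f ∈ suppFunctionals (T ε) := by rw [hf]; rfl
  have hp : ∀ j : {j : Fin n // T (Pi.single j 1) ≠ 0}, 0 < ε j.1 * f (T (Pi.single j.1 1)) :=
    fun j => pos_of_supp T hN hε hf j.2
  have hcε : ∀ j : {j : Fin n // T (Pi.single j 1) ≠ 0},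
      c j * f (T (Pi.single j.1 1)) = |c j| * (ε j.1 * f (T (Pi.single j.1 1))) := by
    intro j
    have : ε j.1 = if 0 ≤ c j then 1 else -1 := by
      simp only [ε]; rw [dif_pos j.2]
    rw [this]
    split_ifs with h
    · rw [abs_of_nonneg h]; ring
    · rw [abs_of_neg (not_le.1 h)]; ring
  have h0 := congrArg f hc
  simp only [map_sum, map_smul, smul_eq_mul, map_zero, hcε] at h0
  rw [Finset.sum_eq_zero_iff_of_nonneg
    (fun j _ => mul_nonneg (abs_nonneg _) (hp j).le)] at h0
  have h1 := h0 i (Finset.mem_univ _)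
  have h2 := mul_pos (abs_pos.2 hi) (hp i)
  linarith

lemma exists_pair [StrictConvexSpace ℝ Y]
    (hYsmooth : ∀ y ∈ sphere (0 : Y) 1, ∃ g, suppFunctionals y = {g})
    (T : (Fin n → ℝ) →L[ℝ] Y)
    (hN : ∀ ε, IsSign ε → ‖T ε‖ = 1)
    (hrank : finrank ℝ (LinearMap.range (T : (Fin n → ℝ) →ₗ[ℝ] Y)) = 2) :
    ∃ i k : Fin n, i ≠ k ∧ ∀ j, T (Pi.single j 1) ≠ 0 ↔ (j = i ∨ j = k) := by
  classical
  have h := finrank_span_eq_card (linInd hYsmooth T hN)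
  have hs : Submodule.span ℝ (Set.range (fun j : {j : Fin n // T (Pi.single j 1) ≠ 0} =>
      T (Pi.single j.1 1))) = LinearMap.range (T : (Fin n → ℝ) →ₗ[ℝ] Y) := by
    apply le_antisymm
    · rw [Submodule.span_le]
      rintro _ ⟨j, rfl⟩
      exact ⟨_, rfl⟩
    · rintro _ ⟨x, rfl⟩
      change T x ∈ _
      rw [T_eq_sum]
      refine Submodule.sum_mem _ fun j _ => Submodule.smul_mem _ _ ?_
      by_cases hj : T (Pi.single j 1) = 0
      · rw [hj]; exact Submodule.zero_mem _
      · exact Submodule.subset_span ⟨⟨j, hj⟩, rfl⟩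
  rw [hs, hrank, Fintype.card_subtype] at h
  obtain ⟨i, k, hik, he⟩ := Finset.card_eq_two.1 h.symm
  refine ⟨i, k, hik, fun j => ?_⟩
  have := Finset.ext_iff.1 he j
  simpa using this

/-- The isometric copy of `Y × Y` inside the operators. -/
noncomputable def Phi (i k : Fin n) : (Y × Y) →ₗ[ℝ] ((Fin n → ℝ) →L[ℝ] Y) where
  toFun p := ((2:ℝ)⁻¹ • ((ContinuousLinearMap.proj i : (Fin n → ℝ) →L[ℝ] ℝ) +
      (ContinuousLinearMap.proj k : (Fin n → ℝ) →L[ℝ] ℝ))).smulRight p.1 +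
    ((2:ℝ)⁻¹ • ((ContinuousLinearMap.proj i : (Fin n → ℝ) →L[ℝ] ℝ) -
      (ContinuousLinearMap.proj k : (Fin n → ℝ) →L[ℝ] ℝ))).smulRight p.2
  map_add' p q := by
    ext x
    simp only [add_apply, ContinuousLinearMap.smulRight_apply, Prod.fst_add,
      Prod.snd_add, smul_add]
    abel
  map_smul' c p := by
    ext x
    simp only [add_apply, ContinuousLinearMap.smulRight_apply, Prod.smul_fst,
      Prod.smul_snd, smul_add, smul_apply, RingHom.id_apply]
    rw [smul_comm c, smul_comm c]

lemma Phi_apply (i k : Fin n) (p : Y × Y) (x : Fin n → ℝ) :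
    Phi i k p x = ((2:ℝ)⁻¹ * (x i + x k)) • p.1 + ((2:ℝ)⁻¹ * (x i - x k)) • p.2 := by
  simp [Phi, mul_add]

lemma norm_Phi_le (i k : Fin n) (p : Y × Y) (h1 : ‖p.1‖ ≤ 1) (h2 : ‖p.2‖ ≤ 1) :
    ‖Phi i k p‖ ≤ 1 := by
  refine ContinuousLinearMap.opNorm_le_bound _ zero_le_one fun x => ?_
  rw [Phi_apply, one_mul]
  have hi := abs_le.1 (Real.norm_eq_abs (x i) ▸ norm_le_pi_norm x i)
  have hk := abs_le.1 (Real.norm_eq_abs (x k) ▸ norm_le_pi_norm x k)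
  refine (norm_add_le _ _).trans ?_
  rw [norm_smul, norm_smul, Real.norm_eq_abs, Real.norm_eq_abs]
  have a1 := mul_le_of_le_one_right (abs_nonneg ((2:ℝ)⁻¹ * (x i + x k))) h1
  have a2 := mul_le_of_le_one_right (abs_nonneg ((2:ℝ)⁻¹ * (x i - x k))) h2
  have : |(2:ℝ)⁻¹ * (x i + x k)| + |(2:ℝ)⁻¹ * (x i - x k)| ≤ ‖x‖ := by
    rcases abs_cases ((2:ℝ)⁻¹ * (x i + x k)) with h | h <;>
    rcases abs_cases ((2:ℝ)⁻¹ * (x i - x k)) with h' | h' <;> linarith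
  linarith

lemma supp_kills {p : Y} {g : Y →L[ℝ] ℝ} (hp : ‖p‖ = 1) (hg : suppFunctionals p = {g})
    (G : Y →L[ℝ] ℝ) (hG : ∀ a, ‖a‖ ≤ 1 → G a ≤ G p) {a : Y} (ha : g a = 0) : G a = 0 := by
  have h0 : 0 ≤ G p := by simpa using hG 0 (by simp)
  have hn : ‖G‖ ≤ G p := by
    refine ContinuousLinearMap.opNorm_le_of_unit_norm h0 fun x hx => ?_
    rw [Real.norm_eq_abs, abs_le]
    have h1 := hG x hx.le
    have h2 := hG (-x) (by rw [norm_neg]; exact hx.le)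
    rw [map_neg] at h2
    constructor <;> linarith
  have hn' : G p ≤ ‖G‖ := by
    have := (le_abs_self _).trans (G.le_opNorm p)
    rwa [hp, mul_one] at this
  rcases h0.lt_or_eq with h | h
  · have hmem : (G p)⁻¹ • G ∈ suppFunctionals p := by
      refine ⟨?_, ?_⟩
      · rw [norm_smul, norm_inv, Real.norm_eq_abs, abs_of_pos h, le_antisymm hn hn']
        exact inv_mul_cancel₀ h.ne'
      · simp [h.ne']
    rw [hg, mem_singleton_iff] at hmem
    rw [← hmem] at ha
    simpa [h.ne'] using ha
  · have : G = 0 := by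
      rw [← norm_le_zero_iff, h]; exact hn
    simp [this]

/-- The functional `S ↦ g (S x)`. -/
noncomputable def evalF (g : Y →L[ℝ] ℝ) (x : Fin n → ℝ) : ((Fin n → ℝ) →L[ℝ] Y) →L[ℝ] ℝ :=
  g.comp (ContinuousLinearMap.apply ℝ Y x)

lemma evalF_mem (T : (Fin n → ℝ) →L[ℝ] Y) (hT : ‖T‖ = 1) {ε : Fin n → ℝ} (hε : IsSign ε)
    {g : Y →L[ℝ] ℝ} (hg : ‖g‖ = 1) (hgT : g (T ε) = 1) : evalF g ε ∈ suppFunctionals T := by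
  have hv : evalF g ε T = 1 := hgT
  refine ⟨le_antisymm ?_ ?_, hv⟩
  · refine ContinuousLinearMap.opNorm_le_bound _ zero_le_one fun S => ?_
    change ‖g (S ε)‖ ≤ _
    have h1 := g.le_opNorm (S ε)
    have h2 := S.le_opNorm ε
    have h3 : ‖ε‖ ≤ 1 := mem_closedBall_zero_iff.1 hε.ext.1
    have h4 := mul_le_of_le_one_right (norm_nonneg S) h3
    rw [hg] at h1
    linarith
  · have := (le_abs_self _).trans ((evalF g ε).le_opNorm T)
    rwa [hv, hT, mul_one] at this

lemma finrank_span_supp {E : Type*} [NormedAddCommGroup E] [NormedSpace ℝ E]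
    [FiniteDimensional ℝ E] (s : Set (E →L[ℝ] ℝ)) (K : Submodule ℝ E)
    (h : ∀ x, x ∈ K ↔ ∀ f ∈ s, f x = 0) :
    finrank ℝ (Submodule.span ℝ s) + finrank ℝ K = finrank ℝ E := by
  let e : (E →L[ℝ] ℝ) ≃ₗ[ℝ] (E →ₗ[ℝ] ℝ) := LinearMap.toContinuousLinearMap.symm
  have hK : ((Submodule.span ℝ s).map (e : (E →L[ℝ] ℝ) →ₗ[ℝ] Module.Dual ℝ E)).dualCoannihilator
      = K := by
    ext x
    rw [h, Submodule.mem_dualCoannihilator]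
    constructor
    · intro hx f hf
      exact hx (e f) (Submodule.mem_map_of_mem (Submodule.subset_span hf))
    · rintro hx _ ⟨f, hf, rfl⟩
      change f x = 0
      induction hf using Submodule.span_induction with
      | mem f hf => exact hx f hf
      | zero => rfl
      | add f g _ _ hf hg => simp [hf, hg]
      | smul c f _ hf => simp [hf]
  rw [← hK, ← LinearEquiv.finrank_map_eq e]
  exact Subspace.finrank_add_finrank_dualCoannihilator_eq _

lemma finrank_ker (hY : finrank ℝ Y = 2) [FiniteDimensional ℝ Y] {g : Y →L[ℝ] ℝ} {y : Y}
    (h : g y = 1) : finrank ℝ (LinearMap.ker (g : Y →ₗ[ℝ] ℝ)) = 1 := by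
  have h1 := LinearMap.finrank_range_add_finrank_ker (g : Y →ₗ[ℝ] ℝ)
  have h2 : LinearMap.range (g : Y →ₗ[ℝ] ℝ) = ⊤ := by
    rw [LinearMap.range_eq_top]
    intro c
    exact ⟨c • y, by simp [h]⟩
  rw [h2, finrank_top, finrank_self, hY] at h1
  omega

/-- The product of submodules is linearly equivalent to the product type. -/
def prodEq (p q : Submodule ℝ Y) : (p.prod q) ≃ₗ[ℝ] (p × q) where
  toFun x := (⟨x.1.1, x.2.1⟩, ⟨x.1.2, x.2.2⟩)
  invFun x := ⟨(x.1.1, x.2.1), ⟨x.1.2, x.2.2⟩⟩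
  map_add' _ _ := rfl
  map_smul' _ _ := rfl
  left_inv _ := rfl
  right_inv _ := rfl

end Stmt7

open Stmt7 in
theorem stmt_7 {n : ℕ} {Y : Type*} [NormedAddCommGroup Y] [NormedSpace ℝ Y]
    [FiniteDimensional ℝ Y] (hY : finrank ℝ Y = 2)
    [StrictConvexSpace ℝ Y]
    (hYsmooth : ∀ y ∈ sphere (0 : Y) 1, ∃ g, suppFunctionals y = {g})
    (T : (Fin n → ℝ) →L[ℝ] Y) (hT : ‖T‖ = 1)
    (hMT : extremePoints ℝ (closedBall (0 : Fin n → ℝ) 1) ⊆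
      {x ∈ sphere (0 : Fin n → ℝ) 1 | ‖T x‖ = ‖T‖})
    (hrank : finrank ℝ (LinearMap.range (T : (Fin n → ℝ) →ₗ[ℝ] Y)) = 2) :
    finrank ℝ (Submodule.span ℝ (suppFunctionals T)) = 2 * n - 2 := by
  classical
  have hN : ∀ ε, IsSign ε → ‖T ε‖ = 1 := fun ε hε => (hMT hε.ext).2.trans hT
  obtain ⟨i, k, hik, hnz⟩ := exists_pair hYsmooth T hN hrank
  have hki : k ≠ i := hik.symm
  set u := T (Pi.single i 1) with hu
  set v := T (Pi.single k 1) with hv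
  have hTx : ∀ x, T x = x i • u + x k • v := by
    intro x
    rw [T_eq_sum, ← Finset.sum_subset (Finset.subset_univ {i, k}), Finset.sum_pair hik]
    intro j _ hj
    have : T (Pi.single j 1) = 0 := by
      by_contra h
      exact hj (by simpa using (hnz j).1 h)
    rw [this, smul_zero]
  -- reference sign vectors
  let ep : Fin n → ℝ := fun _ => 1
  let em : Fin n → ℝ := Function.update ep k (-1)
  have hep : IsSign ep := fun _ => Or.inl rfl
  have hem : IsSign em := hep.update k (Or.inr rfl)
  have hTp : T ep = u + v := by rw [hTx]; simp [ep]
  have hTm : T em = u - v := by rw [hTx]; simp [em, ep, hik, sub_eq_add_neg]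
  have hnp : ‖u + v‖ = 1 := hTp ▸ hN ep hep
  have hnm : ‖u - v‖ = 1 := hTm ▸ hN em hem
  obtain ⟨gp, hgp⟩ := hYsmooth (u + v) (by simpa using hnp)
  obtain ⟨gm, hgm⟩ := hYsmooth (u - v) (by simpa using hnm)
  have hgp' : gp ∈ suppFunctionals (u + v) := by rw [hgp]; rfl
  have hgm' : gm ∈ suppFunctionals (u - v) := by rw [hgm]; rfl
  have p1 := pos_of_supp T hN hep (hTp ▸ hgp') ((hnz i).2 (Or.inl rfl))
  have p2 := pos_of_supp T hN hep (hTp ▸ hgp') ((hnz k).2 (Or.inr rfl))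
  have p3 := pos_of_supp T hN hem (hTm ▸ hgm') ((hnz i).2 (Or.inl rfl))
  have p4 := pos_of_supp T hN hem (hTm ▸ hgm') ((hnz k).2 (Or.inr rfl))
  rw [← hu] at p1 p3
  rw [← hv] at p2 p4
  simp only [em, ep, Function.update_self, Function.update_of_ne hik, one_mul] at p1 p2 p3 p4
  have hrange : LinearMap.range (T : (Fin n → ℝ) →ₗ[ℝ] Y) = ⊤ :=
    Submodule.eq_top_of_finrank_eq (hrank.trans hY.symm)
  have hindep : ∀ y, gp y = 0 → gm y = 0 → y = 0 := by
    intro y h1 h2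
    obtain ⟨x, hx⟩ := LinearMap.range_eq_top.1 hrange y
    change T x = y at hx
    rw [hTx] at hx
    rw [← hx] at h1 h2 ⊢
    simp only [map_add, map_smul, smul_eq_mul] at h1 h2
    have hd : 0 < gp u * (-1 * gm v) + gp v * gm u := by positivity
    have e1 : x i * (gp u * (-1 * gm v) + gp v * gm u) = 0 := by
      linear_combination (-gm v) * h1 + gp v * h2
    have e2 : x k * (gp u * (-1 * gm v) + gp v * gm u) = 0 := by
      linear_combination (gm u) * h1 - gp u * h2
    rw [(mul_eq_zero.1 e1).resolve_right hd.ne', (mul_eq_zero.1 e2).resolve_right hd.ne']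
    simp
  let K0 : Submodule ℝ (Y × Y) :=
    (LinearMap.ker (gp : Y →ₗ[ℝ] ℝ)).prod (LinearMap.ker (gm : Y →ₗ[ℝ] ℝ))
  have hinj : Function.Injective (Phi i k : (Y × Y) →ₗ[ℝ] ((Fin n → ℝ) →L[ℝ] Y)) := by
    rw [← LinearMap.ker_eq_bot, LinearMap.ker_eq_bot']
    intro p hp
    have h1 := congrArg (fun S => S ep) hp
    have h2 := congrArg (fun S => S em) hp
    simp only [Phi_apply, em, ep, Function.update_self, Function.update_of_ne hik,
      zero_apply] at h1 h2
    norm_num at h1 h2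
    exact Prod.ext h1 h2
  have hK : finrank ℝ (K0.map (Phi i k)) = 2 := by
    rw [← LinearEquiv.finrank_eq (Submodule.equivMapOfInjective _ hinj K0),
      LinearEquiv.finrank_eq (prodEq _ _), finrank_prod,
      finrank_ker hY hgp'.2, finrank_ker hY hgm'.2]
  have hTPhi : T = Phi i k (u + v, u - v) := by
    ext1 x
    rw [hTx, Phi_apply]
    module
  have main := finrank_span_supp (suppFunctionals T) (K0.map (Phi i k)) (by
    intro S
    constructor
    · rintro ⟨⟨a, b⟩, ⟨ha, hb⟩, rfl⟩ F ⟨hF1, hF2⟩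
      have hFle : ∀ a b : Y, ‖a‖ ≤ 1 → ‖b‖ ≤ 1 →
          F (Phi i k (a, 0)) + F (Phi i k (0, b)) ≤ 1 := by
        intro a b ha hb
        rw [← map_add, ← map_add]
        have h1 := (le_abs_self _).trans (F.le_opNorm (Phi i k ((a, 0) + (0, b))))
        rw [hF1, one_mul] at h1
        exact h1.trans (norm_Phi_le _ _ _ (by simpa using ha) (by simpa using hb))
      have hFe : F (Phi i k (u + v, 0)) + F (Phi i k (0, u - v)) = 1 := by
        rw [← map_add, ← map_add, ← hF2, hTPhi]
        simp
      let G1 : Y →L[ℝ] ℝ := LinearMap.toContinuousLinearMap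
        ((F : _ →ₗ[ℝ] ℝ) ∘ₗ Phi i k ∘ₗ LinearMap.inl ℝ Y Y)
      let G2 : Y →L[ℝ] ℝ := LinearMap.toContinuousLinearMap
        ((F : _ →ₗ[ℝ] ℝ) ∘ₗ Phi i k ∘ₗ LinearMap.inr ℝ Y Y)
      have k1 : G1 a = 0 := supp_kills hnp hgp G1 (fun c hc => by
        have := hFle c (u - v) hc hnm.le
        change F (Phi i k (c, 0)) ≤ F (Phi i k (u + v, 0))
        linarith) ha
      have k2 : G2 b = 0 := supp_kills hnm hgm G2 (fun c hc => by
        have := hFle (u + v) c hnp.le hc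
        change F (Phi i k (0, c)) ≤ F (Phi i k (0, u - v))
        linarith) hb
      change F (Phi i k (a, 0)) = 0 at k1
      change F (Phi i k (0, b)) = 0 at k2
      have : ((a, b) : Y × Y) = (a, 0) + (0, b) := by simp
      rw [this, map_add, map_add, k1, k2, add_zero]
    · intro hS
      have hgen : ∀ (g : Y →L[ℝ] ℝ) (ε : Fin n → ℝ), IsSign ε → g ∈ suppFunctionals (T ε) →
          g (S ε) = 0 ∧ ∀ j, j ≠ i → j ≠ k → g (S (Pi.single j 1)) = 0 := by
        intro g ε hε hg
        have h0 : g (S ε) = 0 := hS _ (evalF_mem T hT hε hg.1 hg.2)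
        refine ⟨h0, fun j hji hjk => ?_⟩
        have hs : IsSign (Function.update ε j (-ε j)) := by
          apply hε.update
          rcases hε j with h | h <;> simp [h]
        have h1 : g (S (Function.update ε j (-ε j))) = 0 := by
          refine hS _ (evalF_mem T hT hs hg.1 ?_)
          rw [hTx, Function.update_of_ne hji.symm, Function.update_of_ne hjk.symm, ← hTx]
          exact hg.2
        rw [update_eq, map_sub, map_sub, h0, map_smul, map_smul, smul_eq_mul] at h1
        rcases hε j with h | h <;> rw [h] at h1 <;> linarith
      obtain ⟨a1, a2⟩ := hgen gp ep hep (hTp ▸ hgp')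
      obtain ⟨b1, b2⟩ := hgen gm em hem (hTm ▸ hgm')
      have hSx : ∀ x, S x = x i • S (Pi.single i 1) + x k • S (Pi.single k 1) := by
        intro x
        rw [T_eq_sum, ← Finset.sum_subset (Finset.subset_univ {i, k}), Finset.sum_pair hik]
        intro j _ hj
        simp only [Finset.mem_insert, Finset.mem_singleton, not_or] at hj
        rw [hindep _ (a2 j hj.1 hj.2) (b2 j hj.1 hj.2), smul_zero]
      refine ⟨(S ep, S em), ⟨a1, b1⟩, ?_⟩
      ext1 x
      rw [Phi_apply, hSx x, hSx ep, hSx em]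
      simp only [em, ep, Function.update_self, Function.update_of_ne hik]
      module)
  have hE : finrank ℝ ((Fin n → ℝ) →L[ℝ] Y) = n * 2 := by
    rw [← LinearEquiv.finrank_eq
      (LinearMap.toContinuousLinearMap : ((Fin n → ℝ) →ₗ[ℝ] Y) ≃ₗ[ℝ] _), finrank_linearMap, hY]
    simp
  omega
end

section
/- Let X = ℓ∞ⁿ and let Y be a two-dimensional real normed linear space. Let T : X → Y be a bounded linear operator with ‖T‖ = 1 such that Ext(B_X) ⊆ M_T. Suppose the set S = {x ∈ Ext(B_X) : Tx is not smooth} is nonempty and the maximal number of linearly independent vectors in S is k (i.e., dim span S = k). Then T is (n+k)-smooth, i.e., dim span J(T) = n + k. -/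
open Metric Set Module

/-- The extreme points of the unit ball of `ℓ∞ⁿ`. -/
def extB (n : ℕ) : Set (Fin n → ℝ) := extremePoints ℝ (closedBall (0 : Fin n → ℝ) 1)

lemma mem_extB {n : ℕ} {x : Fin n → ℝ} : x ∈ extB n ↔ ∀ i, x i = -1 ∨ x i = 1 := by
  unfold extB
  rw [closedBall_pi _ zero_le_one, extremePoints_pi]
  simp [Real.closedBall_eq_Icc, Set.extremePoints_Icc]

lemma extB_finite (n : ℕ) : (extB n).Finite := by
  have : (Set.univ.pi fun _ : Fin n => ({-1, 1} : Set ℝ)).Finite :=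
    Set.Finite.pi fun _ => Set.toFinite _
  refine this.subset ?_
  intro x hx
  simpa using mem_extB.1 hx

lemma closure_extB (n : ℕ) : closure (convexHull ℝ (extB n)) = closedBall (0 : Fin n → ℝ) 1 :=
  closure_convexHull_extremePoints (isCompact_closedBall _ _) (convex_closedBall _ _)

lemma span_extB (n : ℕ) : Submodule.span ℝ (extB n) = ⊤ := by
  have hb : closedBall (0 : Fin n → ℝ) 1 ⊆ Submodule.span ℝ (extB n) := by
    rw [← closure_extB]
    refine closure_minimal ?_ (Submodule.closed_of_finiteDimensional _)
    exact convexHull_min Submodule.subset_span (Submodule.convex _)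
  rw [eq_top_iff]
  intro x _
  by_cases hx : x = 0
  · simp [hx]
  have hx' : ‖x‖ ≠ 0 := norm_ne_zero_iff.2 hx
  have h1 : ‖x‖⁻¹ • x ∈ Submodule.span ℝ (extB n) := by
    apply hb
    simp [norm_smul, hx']
  have := Submodule.smul_mem _ ‖x‖ h1
  rwa [smul_inv_smul₀ hx'] at this

lemma opNorm_le_extB {n : ℕ} {Y : Type*} [NormedAddCommGroup Y] [NormedSpace ℝ Y]
    (A : (Fin n → ℝ) →L[ℝ] Y) {C : ℝ} (hC : 0 ≤ C) (h : ∀ x ∈ extB n, ‖A x‖ ≤ C) : ‖A‖ ≤ C := by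
  have hb : closedBall (0 : Fin n → ℝ) 1 ⊆ A ⁻¹' (closedBall 0 C) := by
    rw [← closure_extB]
    refine closure_minimal ?_ (isClosed_closedBall.preimage A.continuous)
    refine convexHull_min ?_ ((convex_closedBall _ _).linear_preimage A.toLinearMap)
    intro x hx
    simpa using h x hx
  refine ContinuousLinearMap.opNorm_le_of_unit_norm hC fun x hx => ?_
  simpa using hb (show x ∈ closedBall (0 : Fin n → ℝ) 1 by simp [hx])

/-- The functional `A ↦ f (A x)`. -/
noncomputable def tens {n : ℕ} {Y : Type*} [NormedAddCommGroup Y] [NormedSpace ℝ Y]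
    (f : Y →L[ℝ] ℝ) (x : Fin n → ℝ) : ((Fin n → ℝ) →L[ℝ] Y) →L[ℝ] ℝ :=
  f.comp (ContinuousLinearMap.apply ℝ Y x)

section
variable {n : ℕ} {Y : Type*} [NormedAddCommGroup Y] [NormedSpace ℝ Y]

lemma tens_apply (f : Y →L[ℝ] ℝ) (x : Fin n → ℝ) (A : (Fin n → ℝ) →L[ℝ] Y) :
    tens f x A = f (A x) := rfl

lemma tens_mem (T : (Fin n → ℝ) →L[ℝ] Y) (hT : ‖T‖ = 1) {x : Fin n → ℝ} (hx : ‖x‖ ≤ 1)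
    {f : Y →L[ℝ] ℝ} (hf : f ∈ suppFunctionals (T x)) : tens f x ∈ suppFunctionals T := by
  obtain ⟨h1, h2⟩ := hf
  have h3 : tens f x T = 1 := h2
  refine ⟨le_antisymm ?_ ?_, h3⟩
  · refine ContinuousLinearMap.opNorm_le_bound _ zero_le_one fun A => ?_
    rw [tens_apply]
    calc ‖f (A x)‖ ≤ ‖f‖ * ‖A x‖ := f.le_opNorm _
      _ ≤ 1 * (‖A‖ * 1) := by
        rw [h1]; gcongr; exact (A.le_opNorm x).trans (by gcongr)
      _ = 1 * ‖A‖ := by ring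
  · have := (tens f x).le_opNorm T
    rw [h3, hT] at this
    simpa using this

/-- Evaluation at the extreme points is isometric. -/
noncomputable def evalExt (n : ℕ) (Y : Type*) [NormedAddCommGroup Y] [NormedSpace ℝ Y]
    [Fintype (extB n)] : ((Fin n → ℝ) →L[ℝ] Y) →ₗᵢ[ℝ] (extB n → Y) where
  toFun A := fun x => A x
  map_add' _ _ := rfl
  map_smul' _ _ := rfl
  norm_map' A := by
    apply le_antisymm
    · refine (pi_norm_le_iff_of_nonneg (norm_nonneg _)).2 fun x => ?_
      have hx : ‖(x : Fin n → ℝ)‖ ≤ 1 := by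
        have := extremePoints_subset x.2
        simpa using this
      exact (A.le_opNorm x).trans (mul_le_of_le_one_right (norm_nonneg _) hx)
    · refine opNorm_le_extB A (norm_nonneg _) fun x hx => ?_
      exact norm_le_pi_norm (fun x : extB n => A x) ⟨x, hx⟩

/-- Representation of the supporting functionals of `T`. -/
lemma supp_repr [Fintype (extB n)] (T : (Fin n → ℝ) →L[ℝ] Y)
    (hT : ∀ x ∈ extB n, ‖T x‖ = 1) {F : ((Fin n → ℝ) →L[ℝ] Y) →L[ℝ] ℝ}
    (hF : F ∈ suppFunctionals T) :
    ∃ f : extB n → (Y →L[ℝ] ℝ), F = ∑ x, tens (f x) x ∧ ∀ x : extB n, ‖f x‖ = f x (T x) := by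
  classical
  obtain ⟨hF1, hF2⟩ := hF
  let E := evalExt n Y
  let e := E.equivRange
  obtain ⟨G, hG, hGn⟩ := exists_extension_norm_eq (𝕜 := ℝ) (LinearMap.range E.toLinearMap)
    (F.comp (e.symm.toContinuousLinearEquiv : _ →L[ℝ] _))
  have hGE : ∀ A, G (E A) = F A := by
    intro A
    have := hG (e A)
    rw [show ((e A : LinearMap.range E.toLinearMap) : extB n → Y) = E A from rfl] at this
    rw [this]
    simp
  have hGn' : ‖G‖ ≤ 1 := by
    rw [hGn]
    refine ContinuousLinearMap.opNorm_le_bound _ zero_le_one fun A => ?_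
    refine (F.le_opNorm _).trans ?_
    rw [hF1]
    simp
  let f : extB n → (Y →L[ℝ] ℝ) := fun x => G.comp (ContinuousLinearMap.single ℝ (fun _ => Y) x)
  have hf : ∀ x y, f x y = G (Pi.single x y) := fun x y => rfl
  refine ⟨f, ?_, ?_⟩
  · ext A
    rw [_root_.sum_apply, ← hGE]
    simp only [tens_apply, hf]
    rw [← map_sum]
    congr 1
    exact (Finset.univ_sum_single (E A)).symm
  · intro x
    have key : ∀ y, ‖y‖ ≤ 1 → f x y ≤ f x (T x) := by
      intro y hy
      have h1 : ‖E T + Pi.single x (y - T x)‖ ≤ 1 := by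
        refine (pi_norm_le_iff_of_nonneg zero_le_one).2 fun z => ?_
        by_cases hz : z = x
        · subst hz
          simpa [E, evalExt] using hy
        · have : (E T + Pi.single x (y - T x) : extB n → Y) z = T z := by
            simp [hz, E, evalExt]
          rw [this, hT z z.2]
      have h2 : G (E T + Pi.single x (y - T x)) ≤ 1 :=
        (le_abs_self _).trans ((G.le_opNorm _).trans (by nlinarith [norm_nonneg G, norm_nonneg (E T + Pi.single x (y - T x))]))
      rw [map_add, hGE, hF2, ← hf, map_sub] at h2
      linarith
    have h0 : 0 ≤ f x (T x) := by simpa using key 0 (by simp)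
    apply le_antisymm
    · refine ContinuousLinearMap.opNorm_le_of_unit_norm h0 fun y hy => ?_
      rw [Real.norm_eq_abs, abs_le]
      have := key (-y) (by simp [hy])
      rw [map_neg] at this
      exact ⟨by linarith, key y hy.le⟩
    · have := (le_abs_self _).trans ((f x).le_opNorm (T x))
      rwa [hT x x.2, mul_one] at this

lemma exists_supp {y : Y} (hy : ‖y‖ = 1) : ∃ f, f ∈ suppFunctionals y := by
  obtain ⟨g, h1, h2⟩ := exists_dual_vector ℝ y (by simp [hy])
  exact ⟨g, h1, by rw [h2, hy]; simp⟩

lemma finrank_dual_cont [FiniteDimensional ℝ Y] : finrank ℝ (Y →L[ℝ] ℝ) = finrank ℝ Y := by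
  rw [← (LinearMap.toContinuousLinearMap : (Y →ₗ[ℝ] ℝ) ≃ₗ[ℝ] _).finrank_eq]
  exact Subspace.dual_finrank_eq

lemma pair_span {V : Type*} [AddCommGroup V] [Module ℝ V] (hV : finrank ℝ V = 2) {a b : V}
    (h : LinearIndependent ℝ ![a, b]) (v : V) : ∃ s t : ℝ, s • a + t • b = v := by
  have := h.span_eq_top_of_card_eq_finrank (by simp [hV])
  have hv : v ∈ Submodule.span ℝ (Set.range ![a, b]) := by rw [this]; trivial
  rw [Matrix.range_cons_cons_empty] at hv
  exact Submodule.mem_span_pair.1 hv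

lemma span_supp_of_not_smooth [FiniteDimensional ℝ Y] (hY : finrank ℝ Y = 2) {y : Y}
    (hy : ‖y‖ = 1) (hns : ¬ IsSmoothPoint y) : Submodule.span ℝ (suppFunctionals y) = ⊤ := by
  obtain ⟨f, hf⟩ := exists_supp hy
  have : ∃ f' ∈ suppFunctionals y, f' ≠ f := by
    by_contra! hcon
    exact hns ⟨f, Set.eq_singleton_iff_unique_mem.2 ⟨hf, hcon⟩⟩
  obtain ⟨f', hf', hne⟩ := this
  have hli : LinearIndependent ℝ ![f, f'] := by
    rw [LinearIndependent.pair_iff]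
    intro s t hst
    have h1 : s + t = 0 := by
      have := congrArg (fun g : Y →L[ℝ] ℝ => g y) hst
      simpa [hf.2, hf'.2] using this
    have h2 : t • (f' - f) = 0 := by
      have : s = -t := by linarith
      rw [← hst, this]; module
    have ht : t = 0 := by
      rcases smul_eq_zero.1 h2 with h | h
      · exact h
      · exact absurd (sub_eq_zero.1 h) hne
    exact ⟨by linarith, ht⟩
  rw [eq_top_iff]
  intro v _
  obtain ⟨s, t, rfl⟩ := pair_span (by rw [finrank_dual_cont, hY]) hli v
  exact add_mem (Submodule.smul_mem _ _ (Submodule.subset_span hf))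
    (Submodule.smul_mem _ _ (Submodule.subset_span hf'))

lemma isSmooth_neg {y : Y} (h : IsSmoothPoint y) : IsSmoothPoint (-y) := by
  obtain ⟨g, hg⟩ := h
  have hm : ∀ f, f ∈ suppFunctionals (-y) ↔ -f ∈ suppFunctionals y := by
    intro f
    simp [suppFunctionals]
  refine ⟨-g, ?_⟩
  ext f
  rw [hm, hg, Set.mem_singleton_iff, Set.mem_singleton_iff, neg_eq_iff_eq_neg]

/-- A linear relation among the images of the basis vectors is killed by some norm one functional
supporting an image of an extreme point. -/
lemma relation_killed (T : (Fin n → ℝ) →L[ℝ] Y) (hT : ∀ x ∈ extB n, ‖T x‖ = 1)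
    (c : Fin n → ℝ) (hc : T c = 0) :
    ∃ h : Y →L[ℝ] ℝ, ‖h‖ = 1 ∧ (∀ i, c i ≠ 0 → h (T (Pi.single i 1)) = 0) ∧
      ∃ z ∈ extB n, h (T z) = 1 := by
  classical
  let z : Fin n → ℝ := fun i => if 0 ≤ c i then 1 else -1
  have hz : z ∈ extB n := by
    rw [mem_extB]; intro i
    by_cases h : 0 ≤ c i <;> simp [z, h]
  obtain ⟨h, h1, h2⟩ := exists_supp (hT z hz)
  refine ⟨h, h1, ?_, z, hz, h2⟩
  have hpos : ∀ i, 0 ≤ z i * h (T (Pi.single i 1)) := by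
    intro i
    have hz' : z - (2 * z i) • Pi.single i (1 : ℝ) ∈ extB n := by
      rw [mem_extB] at hz ⊢
      intro j
      by_cases hj : j = i
      · subst hj
        rcases hz j with h | h <;> simp [h] <;> norm_num
      · simpa [hj] using hz j
    have h3 := (le_abs_self _).trans (h.le_opNorm (T (z - (2 * z i) • Pi.single i (1 : ℝ))))
    rw [hT _ hz', h1, map_sub, map_smul, map_sub, map_smul, h2, smul_eq_mul] at h3
    linarith
  have hcz : ∀ i, c i = |c i| * z i := by
    intro i
    by_cases h : 0 ≤ c i
    · simp [z, h, abs_of_nonneg h]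
    · simp [z, h, abs_of_neg (not_le.1 h)]
  have hsum : ∑ i, c i * h (T (Pi.single i 1)) = 0 := by
    have h4 : c = ∑ i, c i • Pi.single i (1 : ℝ) := pi_eq_sum_univ' c
    have h5 : h (T c) = 0 := by rw [hc, map_zero]
    rw [h4] at h5
    simpa only [map_sum, map_smul, smul_eq_mul] using h5
  have hnn : ∀ i ∈ Finset.univ, 0 ≤ c i * h (T (Pi.single i 1)) := by
    intro i _
    rw [hcz i, mul_assoc]
    exact mul_nonneg (abs_nonneg _) (hpos i)
  intro i hi
  have := (Finset.sum_eq_zero_iff_of_nonneg hnn).1 hsum i (Finset.mem_univ _)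
  exact (mul_eq_zero.1 this).resolve_left hi

/-- The case where the kernel of `T` avoids the coordinate `j`. -/
lemma key_aux (hY : finrank ℝ Y = 2)
    (T : (Fin n → ℝ) →L[ℝ] Y) (hT : ∀ x ∈ extB n, ‖T x‖ = 1)
    (w : Fin n → ℝ) (hw : w ∈ extB n) (hwns : ¬ IsSmoothPoint (T w)) (i j : Fin n) (hij : i ≠ j)
    (hli : LinearIndependent ℝ ![T (Pi.single i 1), T (Pi.single j 1)])
    (hker : ∀ c, T c = 0 → c j = 0) :
    ∃ g : Y →L[ℝ] ℝ, ‖g‖ = 1 ∧ ∀ x ∈ extB n, IsSmoothPoint (T x) →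
      g ∈ suppFunctionals (T x) ∨ -g ∈ suppFunctionals (T x) := by
  have hrep : ∀ x, ∃ s t : ℝ, T x = s • T (Pi.single i 1) + t • T (Pi.single j 1) ∧
      T (x - s • Pi.single i (1 : ℝ) - t • Pi.single j (1 : ℝ)) = 0 := by
    intro x
    obtain ⟨s, t, h⟩ := pair_span hY hli (T x)
    refine ⟨s, t, h.symm, ?_⟩
    rw [map_sub, map_sub, map_smul, map_smul, ← h]
    abel
  have hrep1 : ∀ x, ∃ s : ℝ, T x = s • T (Pi.single i 1) + x j • T (Pi.single j 1) ∧
      T (x - s • Pi.single i (1 : ℝ) - x j • Pi.single j (1 : ℝ)) = 0 := by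
    intro x
    obtain ⟨s, t, h, h'⟩ := hrep x
    have h2 := hker _ h'
    have h3 : t = x j := by
      simp [hij.symm] at h2
      linarith
    subst h3
    exact ⟨s, h, h'⟩
  by_cases hk2 : ∀ c, T c = 0 → c i = 0
  · have hrep2 : ∀ x, T x = x i • T (Pi.single i 1) + x j • T (Pi.single j 1) := by
      intro x
      obtain ⟨s, h, h'⟩ := hrep1 x
      have h2 := hk2 _ h'
      have h3 : s = x i := by
        simp [hij] at h2
        linarith
      rw [h, h3]
    have htype : ∀ x ∈ extB n, ∀ y ∈ extB n, x i * x j = y i * y j → T x = T y ∨ T x = -T y := by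
      intro x hx y hy hxy
      rw [hrep2 x, hrep2 y]
      rw [mem_extB] at hx hy
      have e1 := hx i
      have e2 := hx j
      have e3 := hy i
      have e4 := hy j
      rcases e1 with e1 | e1 <;> rcases e2 with e2 | e2 <;> rcases e3 with e3 | e3 <;>
        rcases e4 with e4 | e4 <;> rw [e1, e2, e3, e4] at hxy <;> rw [e1, e2, e3, e4] <;>
        first
        | (exfalso; norm_num at hxy; done)
        | (left; module)
        | (right; module)
    have hprod : ∀ x ∈ extB n, x i * x j = -1 ∨ x i * x j = 1 := by
      intro x hx
      rw [mem_extB] at hx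
      rcases hx i with h | h <;> rcases hx j with h' | h' <;> simp [h, h']
    have hsm : ∀ x ∈ extB n, IsSmoothPoint (T x) → x i * x j = - (w i * w j) := by
      intro x hx hxs
      by_contra hne
      have heq : x i * x j = w i * w j := by
        rcases hprod x hx with h | h <;> rcases hprod w hw with h' | h' <;>
          rw [h, h'] at hne ⊢ <;> norm_num at hne
      rcases htype w hw x hx heq.symm with h | h
      · exact hwns (h ▸ hxs)
      · exact hwns (h ▸ isSmooth_neg hxs)
    by_cases hex : ∃ y ∈ extB n, IsSmoothPoint (T y)
    · obtain ⟨y, hy, hys⟩ := hex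
      obtain ⟨g, hg⟩ := exists_supp (hT y hy)
      refine ⟨g, hg.1, fun x hx hxs => ?_⟩
      rcases htype x hx y hy ((hsm x hx hxs).trans (hsm y hy hys).symm) with h | h
      · left; rw [h]; exact hg
      · right; rw [h]; simpa [suppFunctionals] using hg
    · obtain ⟨g, hg⟩ := exists_supp (hT w hw)
      exact ⟨g, hg.1, fun x hx hxs => absurd ⟨x, hx, hxs⟩ hex⟩
  · push Not at hk2
    obtain ⟨c, hc, hci⟩ := hk2
    obtain ⟨h, h1, h2, z, hz, h3⟩ := relation_killed T hT c hc
    have hi := h2 i hci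
    have hval : ∀ x, h (T x) = x j * h (T (Pi.single j 1)) := by
      intro x
      obtain ⟨s, hs, -⟩ := hrep1 x
      rw [hs, map_add, map_smul, map_smul, hi]
      simp
    refine ⟨h, h1, fun x hx _ => ?_⟩
    have hzj := hval z
    rw [h3] at hzj
    have hxj := hval x
    simp only [suppFunctionals, Set.mem_setOf_eq, norm_neg, h1, true_and,
      _root_.neg_apply]
    rcases mem_extB.1 hz j with e | e <;> rcases mem_extB.1 hx j with e' | e' <;>
      rw [e] at hzj <;> rw [e'] at hxj
    · left; linarith
    · right; linarith
    · right; linarith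
    · left; linarith

lemma key_lemma (hY : finrank ℝ Y = 2)
    (T : (Fin n → ℝ) →L[ℝ] Y) (hT : ∀ x ∈ extB n, ‖T x‖ = 1)
    (w : Fin n → ℝ) (hw : w ∈ extB n) (hwns : ¬ IsSmoothPoint (T w)) :
    ∃ g : Y →L[ℝ] ℝ, ‖g‖ = 1 ∧ ∀ x ∈ extB n, IsSmoothPoint (T x) →
      g ∈ suppFunctionals (T x) ∨ -g ∈ suppFunctionals (T x) := by
  by_cases hex : ∃ i j, LinearIndependent ℝ ![T (Pi.single i 1), T (Pi.single j 1)]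
  · obtain ⟨i, j, hli⟩ := hex
    have hij : i ≠ j := by
      rintro rfl
      have := LinearIndependent.pair_iff.1 hli 1 (-1) (by simp)
      simp at this
    have hor : ∀ c, T c = 0 → c i = 0 ∨ c j = 0 := by
      intro c hc
      by_contra! hne
      obtain ⟨h, h1, h2, -⟩ := relation_killed T hT c hc
      have hz : h = 0 := by
        ext y
        obtain ⟨s, t, rfl⟩ := pair_span hY hli y
        simp [h2 i hne.1, h2 j hne.2]
      simp [hz] at h1
    have hor2 : (∀ c, T c = 0 → c i = 0) ∨ (∀ c, T c = 0 → c j = 0) := by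
      by_contra! hne
      obtain ⟨⟨c, hc, hci⟩, ⟨d, hd, hdj⟩⟩ := hne
      have hcj := (hor c hc).resolve_left hci
      have hdi := (hor d hd).resolve_right hdj
      rcases hor (c + d) (by rw [map_add, hc, hd, add_zero]) with h | h
      · simp [hdi] at h; exact hci h
      · simp [hcj] at h; exact hdj h
    rcases hor2 with h | h
    · refine key_aux hY T hT w hw hwns j i hij.symm ?_ h
      rw [LinearIndependent.pair_symm_iff]
      exact hli
    · exact key_aux hY T hT w hw hwns i j hij hli h
  · push Not at hex
    have hexp : ∀ x, T x = ∑ i, x i • T (Pi.single i 1) := by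
      intro x
      conv_lhs => rw [pi_eq_sum_univ' x]
      simp only [map_sum, map_smul]
    have hi : ∃ i, T (Pi.single i 1) ≠ 0 := by
      by_contra! hall
      have := hT w hw
      rw [hexp w] at this
      simp [hall] at this
    obtain ⟨i, hi⟩ := hi
    have hpar : ∀ l, ∃ a : ℝ, a • T (Pi.single i 1) = T (Pi.single l 1) := by
      intro l
      have := hex i l
      rw [LinearIndependent.pair_iff' hi] at this
      push Not at this
      exact this
    choose a ha using hpar
    have hrep : ∀ x, ∃ s : ℝ, T x = s • T (Pi.single i 1) := by
      intro x
      refine ⟨∑ l, x l * a l, ?_⟩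
      rw [hexp, Finset.sum_smul]
      refine Finset.sum_congr rfl fun l _ => ?_
      rw [← ha l, smul_smul]
    have hker : ∀ c, T c = 0 → c i = 0 := by
      intro c hc
      by_contra hne
      obtain ⟨h, h1, h2, z, hz, h3⟩ := relation_killed T hT c hc
      obtain ⟨s, hs⟩ := hrep z
      rw [hs, map_smul, h2 i hne] at h3
      simp at h3
    have hval : ∀ x, T x = x i • T (Pi.single i 1) := by
      intro x
      obtain ⟨s, hs⟩ := hrep x
      have := hker (x - s • Pi.single i (1 : ℝ)) (by rw [map_sub, map_smul, hs, sub_self])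
      have h3 : s = x i := by
        simp at this
        linarith
      rw [hs, h3]
    obtain ⟨g, hg⟩ := exists_supp (hT w hw)
    refine ⟨g, hg.1, fun x hx _ => ?_⟩
    have : T x = T w ∨ T x = -T w := by
      rw [hval x, hval w]
      rcases mem_extB.1 hx i with e | e <;> rcases mem_extB.1 hw i with e' | e' <;> simp [e, e']
    rcases this with h | h
    · left; rw [h]; exact hg
    · right; rw [h]; simpa [suppFunctionals] using hg

/-- The parametrization of the span of the supporting functionals. -/
noncomputable def param (g h : Y →L[ℝ] ℝ) (W : Submodule ℝ (Fin n → ℝ)) :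
    ((Fin n → ℝ) × W) →ₗ[ℝ] (((Fin n → ℝ) →L[ℝ] Y) →L[ℝ] ℝ) where
  toFun p := tens g p.1 + tens h (p.2 : Fin n → ℝ)
  map_add' p q := by
    ext A
    simp [tens_apply]
    ring
  map_smul' c p := by
    ext A
    simp [tens_apply]

lemma param_apply (g h : Y →L[ℝ] ℝ) (W : Submodule ℝ (Fin n → ℝ)) (p : (Fin n → ℝ) × W) :
    param g h W p = tens g p.1 + tens h (p.2 : Fin n → ℝ) := rfl

lemma param_inj {g h : Y →L[ℝ] ℝ} (hli : LinearIndependent ℝ ![g, h])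
    (W : Submodule ℝ (Fin n → ℝ)) : Function.Injective (param g h W) := by
  rw [injective_iff_map_eq_zero]
  rintro ⟨x, w⟩ hp
  have key : ∀ i, x i = 0 ∧ (w : Fin n → ℝ) i = 0 := by
    intro i
    refine LinearIndependent.pair_iff.1 hli _ _ ?_
    ext y
    have := congrArg (fun F : ((Fin n → ℝ) →L[ℝ] Y) →L[ℝ] ℝ =>
      F ((ContinuousLinearMap.proj (R := ℝ) (φ := fun _ : Fin n => ℝ) i).smulRight y)) hp
    simpa [param_apply, tens_apply] using this
  ext i
  · exact (key i).1
  · exact (key i).2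

/-- `x ↦ f ⊗ x` as a linear map. -/
noncomputable def tensX (f : Y →L[ℝ] ℝ) :
    (Fin n → ℝ) →ₗ[ℝ] (((Fin n → ℝ) →L[ℝ] Y) →L[ℝ] ℝ) where
  toFun x := tens f x
  map_add' p q := by ext A; simp [tens_apply]
  map_smul' c p := by ext A; simp [tens_apply]

/-- `f ↦ f ⊗ x` as a linear map. -/
noncomputable def tensF (x : Fin n → ℝ) :
    (Y →L[ℝ] ℝ) →ₗ[ℝ] (((Fin n → ℝ) →L[ℝ] Y) →L[ℝ] ℝ) where
  toFun f := tens f x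
  map_add' p q := by ext A; simp [tens_apply]
  map_smul' c p := by ext A; simp [tens_apply]

end

theorem stmt_8 {n k : ℕ} {Y : Type*} [NormedAddCommGroup Y] [NormedSpace ℝ Y]
    [FiniteDimensional ℝ Y] (hY : finrank ℝ Y = 2)
    (T : (Fin n → ℝ) →L[ℝ] Y) (hT : ‖T‖ = 1)
    (hMT : extremePoints ℝ (closedBall (0 : Fin n → ℝ) 1) ⊆
      {x ∈ sphere (0 : Fin n → ℝ) 1 | ‖T x‖ = ‖T‖})
    (S : Set (Fin n → ℝ))
    (hS : S = {x ∈ extremePoints ℝ (closedBall (0 : Fin n → ℝ) 1) |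
      ¬ IsSmoothPoint (T x)})
    (hSne : S.Nonempty)
    (hk : finrank ℝ (Submodule.span ℝ S) = k) :
    finrank ℝ (Submodule.span ℝ (suppFunctionals T)) = n + k := by
  classical
  have hE : extremePoints ℝ (closedBall (0 : Fin n → ℝ) 1) = extB n := rfl
  rw [hE] at hMT hS
  have hT1 : ∀ x ∈ extB n, ‖T x‖ = 1 := fun x hx => (hMT hx).2.trans hT
  have hx1 : ∀ x ∈ extB n, ‖x‖ ≤ 1 := fun x hx => by
    have := (hMT hx).1
    simp at this
    exact this.le
  obtain ⟨w, hwS⟩ := hSne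
  have hw := hwS
  rw [hS] at hw
  obtain ⟨g, hg1, hg⟩ := key_lemma hY T hT1 w hw.1 hw.2
  have hg0 : g ≠ 0 := by
    rintro rfl
    simp at hg1
  have hdual : finrank ℝ (Y →L[ℝ] ℝ) = 2 := by rw [finrank_dual_cont, hY]
  obtain ⟨h, hh⟩ : ∃ h : Y →L[ℝ] ℝ, LinearIndependent ℝ ![g, h] := by
    by_contra! hcon
    have : finrank ℝ (Y →L[ℝ] ℝ) ≤ 1 := by
      refine finrank_le_one g fun f => ?_
      have := hcon f
      rw [LinearIndependent.pair_iff' hg0] at this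
      push Not at this
      exact this
    omega
  have hrange : Submodule.span ℝ (suppFunctionals T) =
      LinearMap.range (param g h (Submodule.span ℝ S)) := by
    have hnsmem : ∀ x ∈ S, ∀ f : Y →L[ℝ] ℝ, tens f x ∈ Submodule.span ℝ (suppFunctionals T) := by
      intro x hx f
      rw [hS] at hx
      have hsp := span_supp_of_not_smooth hY (hT1 x hx.1) hx.2
      have hle : Submodule.span ℝ (suppFunctionals (T x)) ≤
          (Submodule.span ℝ (suppFunctionals T)).comap (tensF x) := by
        rw [Submodule.span_le]
        intro f hf
        exact Submodule.subset_span (tens_mem T hT (hx1 x hx.1) hf)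
      rw [hsp] at hle
      exact hle (Submodule.mem_top : f ∈ ⊤)
    apply le_antisymm
    · rw [Submodule.span_le]
      intro F hF
      haveI : Fintype (extB n) := (extB_finite n).fintype
      obtain ⟨f, hf, hfn⟩ := supp_repr T hT1 hF
      rw [hf]
      refine Submodule.sum_mem _ fun x _ => ?_
      by_cases hxs : IsSmoothPoint (T x)
      · have hex : ∃ c : ℝ, f x = c • g := by
          by_cases hf0 : f x = 0
          · exact ⟨0, by simp [hf0]⟩
          have hn0 : ‖f x‖ ≠ 0 := norm_ne_zero_iff.2 hf0
          have hmem : ‖f x‖⁻¹ • f x ∈ suppFunctionals (T x) := by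
            refine ⟨by simp [norm_smul, hn0], ?_⟩
            rw [_root_.smul_apply, ← hfn x, smul_eq_mul, inv_mul_cancel₀ hn0]
          have hgx := hg x x.2 hxs
          obtain ⟨k, hk⟩ := hxs
          rw [hk] at hmem hgx
          simp only [Set.mem_singleton_iff] at hmem hgx
          have hfk : f x = ‖f x‖ • k := by rw [← hmem, smul_inv_smul₀ hn0]
          rcases hgx with e | e
          · exact ⟨‖f x‖, by rw [e]; exact hfk⟩
          · exact ⟨-‖f x‖, by
              ext y
              have h1 := DFunLike.congr_fun hfk y
              have h2 := DFunLike.congr_fun e y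
              rw [_root_.smul_apply, smul_eq_mul] at h1 ⊢
              rw [_root_.neg_apply] at h2
              rw [h1, ← h2]
              ring⟩
        obtain ⟨c, hc⟩ := hex
        refine ⟨(c • (x : Fin n → ℝ), 0), ?_⟩
        rw [param_apply, hc]
        ext A
        simp [tens_apply]
      · have hxS : (x : Fin n → ℝ) ∈ S := by rw [hS]; exact ⟨x.2, hxs⟩
        obtain ⟨s, t, hst⟩ := pair_span hdual hh (f x)
        refine ⟨(s • (x : Fin n → ℝ), t • ⟨x, Submodule.subset_span hxS⟩), ?_⟩
        rw [param_apply, ← hst]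
        ext A
        simp [tens_apply]
    · rintro _ ⟨⟨x, v⟩, rfl⟩
      rw [param_apply]
      apply add_mem
      · have hle : Submodule.span ℝ (extB n) ≤
            (Submodule.span ℝ (suppFunctionals T)).comap (tensX g) := by
          rw [Submodule.span_le]
          intro x hx
          change tens g x ∈ Submodule.span ℝ (suppFunctionals T)
          by_cases hxs : IsSmoothPoint (T x)
          · rcases hg x hx hxs with e | e
            · exact Submodule.subset_span (tens_mem T hT (hx1 x hx) e)
            · have := Submodule.neg_mem _ (Submodule.subset_span (R := ℝ)
                (tens_mem T hT (hx1 x hx) e))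
              have he : -tens (-g) x = tens g x := by
                ext A
                simp [tens_apply]
              rwa [he] at this
          · exact hnsmem x (by rw [hS]; exact ⟨hx, hxs⟩) g
        rw [span_extB] at hle
        exact hle (Submodule.mem_top : x ∈ ⊤)
      · have hle : Submodule.span ℝ S ≤
            (Submodule.span ℝ (suppFunctionals T)).comap (tensX h) := by
          rw [Submodule.span_le]
          intro x hx
          exact hnsmem x hx h
        exact hle v.2
  rw [hrange, LinearMap.finrank_range_of_inj (param_inj hh _), Module.finrank_prod, hk]
  simp
end
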